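/- Suppose M is contractive with contraction rate 0 < a < 1, uniformly continuous, non-degenerate, with b < ∞, and has a dominating Markov chain. Then E(M) is nonempty if and only if there exists x_0 ∈ K at which Condition (T) holds. -/

import Mathlib

open MeasureTheory Filter Topology
open scoped ENNReal NNReal Classical

noncomputable section

/-- A countable Markov system `(K_{i(e)}, w_e, p_e)_{e ∈ E}` on a metric space `K`:
a partition `(K_j)_{j ∈ N}` of `K` into nonempty Borel sets, source and target maps
`i, t : E → N` (`i` surjective), and for each `e ∈ E` Borel maps `w_e` and probability
functions `p_e` (extended by zero outside `K_{i(e)}`) with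
`∑_{e, i(e)=j} p_e(y) = 1` for `y ∈ K_j`. -/
structure MarkovSystem (K : Type*) [MetricSpace K] [MeasurableSpace K]
    (N : Type*) (E : Type*) where
  Kset : N → Set K
  Kset_nonempty : ∀ j, (Kset j).Nonempty
  Kset_measurable : ∀ j, MeasurableSet (Kset j)
  Kset_disjoint : Pairwise (Function.onFun Disjoint Kset)
  Kset_cover : (⋃ j, Kset j) = Set.univ
  i : E → N
  t : E → N
  i_surj : Function.Surjective i
  w : E → K → K
  p : E → K → ℝ
  w_measurable : ∀ e, Measurable (w e)
  p_measurable : ∀ e, Measurable (p e)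
  p_nonneg : ∀ e x, 0 ≤ p e x
  p_le_one : ∀ e x, p e x ≤ 1
  p_zero_outside : ∀ e x, x ∉ Kset (i e) → p e x = 0
  w_mapsTo : ∀ e, Set.MapsTo (w e) (Kset (i e)) (Kset (t e))
  p_pos_somewhere : ∀ e, ∃ x ∈ Kset (i e), 0 < p e x
  p_tsum_one : ∀ j, ∀ x ∈ Kset j, (∑' e : {e : E // i e = j}, p e.val x) = 1

/-- `Ē = E ∪ {∞}` (one-point compactification); with `E` countable its Borel σ-algebra
consists of all subsets. -/
instance optionMeasurableSpace (E : Type*) : MeasurableSpace (Option E) := ⊤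

/-- The code space `Σ̄ = Ē^ℤ`, carrying the product σ-algebra. -/
abbrev CodeSpace (E : Type*) : Type _ := ℤ → Option E

/-- The left shift `S` on the code space, `(Sσ)_{k-1} = σ_k`. -/
def shiftMap (E : Type*) : CodeSpace E → CodeSpace E := fun σ k => σ (k + 1)

/-- The cylinder set `_m[es₀, …, es_{n}] = {σ : σ_{m+k} = es_k}`. -/
def cylSetL {E : Type*} (m : ℤ) (es : List (Option E)) : Set (CodeSpace E) :=
  {σ | ∀ (k : ℕ) (h : k < es.length), σ (m + (k : ℤ)) = es.get ⟨k, h⟩}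

/-- The σ-algebra `𝓕` generated by the cylinder sets `_m[e_m, …, e_0]`, `m ≤ 0`. -/
def pastAlgebra (E : Type*) : MeasurableSpace (CodeSpace E) :=
  MeasurableSpace.generateFrom
    {A | ∃ es : List (Option E), es ≠ [] ∧ A = cylSetL (1 - (es.length : ℤ)) es}

/-- The conditional entropy `h_S(Λ) = H_Λ((_1[e])_{e ∈ Ē} | 𝓕)`. -/
def entropyS {E : Type*} (Λ : Measure (CodeSpace E)) : ℝ≥0∞ :=
  ∑' eo : Option E,
    ∫⁻ σ, ENNReal.ofReal
        (Real.negMulLog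
          ((Λ[Set.indicator {τ : CodeSpace E | τ 1 = eo} (fun _ => (1 : ℝ)) | pastAlgebra E]) σ)) ∂Λ

namespace MarkovSystem

variable {K : Type*} [MetricSpace K] [MeasurableSpace K] {N E : Type*}

/-- The Markov operator `Uf = ∑_e p_e · (f ∘ w_e)` acting on nonnegative Borel functions. -/
def markovOp (M : MarkovSystem K N E) (f : K → ℝ≥0∞) : K → ℝ≥0∞ :=
  fun x => ∑' e : E, ENNReal.ofReal (M.p e x) * f (M.w e x)

/-- The adjoint operator `U*` acting on measures, `(U*ν)(B) = ∫ U(1_B) dν`. -/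
def adjOp (M : MarkovSystem K N E) (ν : Measure K) : Measure K :=
  Measure.sum fun e : E =>
    Measure.map (M.w e) (ν.withDensity fun x => ENNReal.ofReal (M.p e x))

/-- `μ ∈ P(M)`: `μ` is an invariant Borel probability measure, `U*μ = μ`. -/
def IsInvariantMeasure (M : MarkovSystem K N E) (μ : Measure K) : Prop :=
  IsProbabilityMeasure μ ∧ M.adjOp μ = μ

/-- The path space `Σ_G`: all coordinates lie in `E` and `i(σ_{n+1}) = t(σ_n)`. -/
def pathSpace (M : MarkovSystem K N E) : Set (CodeSpace E) :=
  {σ | ∀ n : ℤ, ∃ e e' : E, σ n = some e ∧ σ (n + 1) = some e' ∧ M.i e' = M.t e}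

/-- `T_j = {σ ∈ Σ_G : t(σ_0) = j}`. -/
def Tset (M : MarkovSystem K N E) (j : N) : Set (CodeSpace E) :=
  {σ | σ ∈ M.pathSpace ∧ ∃ e : E, σ 0 = some e ∧ M.t e = j}

/-- `w` extended to `Ē`, with `w_∞ = id`. -/
def wext (M : MarkovSystem K N E) : Option E → K → K := fun o => o.elim id M.w

/-- `p` extended to `Ē`, with `p_∞ = 0`. -/
def pext (M : MarkovSystem K N E) : Option E → K → ℝ := fun o => o.elim (fun _ => 0) M.p

/-- `i` extended to `Ē`, with `i(∞) = j₀`. -/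
def iext (M : MarkovSystem K N E) (j0 : N) : Option E → N := fun o => o.elim j0 M.i

/-- `t` extended to `Ē`, with `t(∞) = j₀`. -/
def text (M : MarkovSystem K N E) (j0 : N) : Option E → N := fun o => o.elim j0 M.t

/-- `iterW M σ n y = w_{σ_0} ∘ w_{σ_{-1}} ∘ ⋯ ∘ w_{σ_{-n}} (y)`. -/
def iterW (M : MarkovSystem K N E) (σ : CodeSpace E) : ℕ → K → K
  | 0, y => M.wext (σ 0) y
  | n + 1, y => M.iterW σ n (M.wext (σ (-(n + 1 : ℤ))) y)

/-- `orbit M j0 xp σ n = w_{σ_0} ∘ ⋯ ∘ w_{σ_{-n}} (x_{i(σ_{-n})})`. -/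
def orbit (M : MarkovSystem K N E) (j0 : N) (xp : N → K) (σ : CodeSpace E) (n : ℕ) : K :=
  M.iterW σ n (xp (M.iext j0 (σ (-(n : ℤ)))))

/-- `D`: the set of `σ ∈ Σ_G` for which `lim_{m → -∞} w_{σ_0} ∘ ⋯ ∘ w_{σ_m}(x_{i(σ_m)})` exists. -/
def codeDomain (M : MarkovSystem K N E) (j0 : N) (xp : N → K) : Set (CodeSpace E) :=
  {σ | σ ∈ M.pathSpace ∧ ∃ l : K, Tendsto (fun n : ℕ => M.orbit j0 xp σ n) atTop (𝓝 l)}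

/-- The coding map `F`: the above limit on `D`, and `x_{t(σ_0)}` elsewhere. -/
def code (M : MarkovSystem K N E) (j0 : N) (xp : N → K) (σ : CodeSpace E) : K :=
  if h : σ ∈ M.codeDomain j0 xp then h.2.choose else xp (M.text j0 (σ 0))

/-- `Λ ∈ E(M)`: `Λ` is a shift-invariant Borel probability measure with `Λ(D) = 1` and
`E_Λ(1_{_1[e]} | 𝓕) = p_e ∘ F` `Λ`-a.e. for every `e ∈ E` (an equilibrium state). -/
def IsEquilibrium (M : MarkovSystem K N E) (j0 : N) (xp : N → K)
    (Λ : Measure (CodeSpace E)) : Prop :=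
  IsProbabilityMeasure Λ ∧ Measure.map (shiftMap E) Λ = Λ ∧
    Λ (M.codeDomain j0 xp) = 1 ∧
    ∀ e : E,
      (Λ[Set.indicator {σ : CodeSpace E | σ 1 = some e} (fun _ => (1 : ℝ)) | pastAlgebra E])
        =ᵐ[Λ] fun σ => M.p e (M.code j0 xp σ)

/-- `pbar` is the family of continuous extensions `p̄_e` of `p_e|_{K_{i(e)}}` to the closure
of `K_{i(e)}`, extended further by zero on `K`. -/
def IsUCExtensionP (M : MarkovSystem K N E) (pbar : E → K → ℝ) : Prop :=
  ∀ e : E, ContinuousOn (pbar e) (closure (M.Kset (M.i e))) ∧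
    (∀ x ∈ M.Kset (M.i e), pbar e x = M.p e x) ∧
    (∀ x, x ∉ closure (M.Kset (M.i e)) → pbar e x = 0)

/-- `wb` is a family of continuous extensions `w̄_e` of `w_e|_{K_{i(e)}}` to the closure
of `K_{i(e)}`. -/
def IsUCExtensionW (M : MarkovSystem K N E) (wb : E → K → K) : Prop :=
  ∀ e : E, ContinuousOn (wb e) (closure (M.Kset (M.i e))) ∧
    (∀ x ∈ M.Kset (M.i e), wb e x = M.w e x)

/-- The Markov system is uniformly continuous: each `w_e|_{K_{i(e)}}` and `p_e|_{K_{i(e)}}`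
is uniformly continuous. -/
def IsUniformlyContinuous (M : MarkovSystem K N E) : Prop :=
  ∀ e : E, UniformContinuousOn (M.w e) (M.Kset (M.i e)) ∧
    UniformContinuousOn (M.p e) (M.Kset (M.i e))

/-- `∂p_e = p̄_e · 1_{cl(K_{i(e)}) \ K_{i(e)}}`. -/
def dp (M : MarkovSystem K N E) (pbar : E → K → ℝ) (e : E) : K → ℝ :=
  Set.indicator (closure (M.Kset (M.i e)) \ M.Kset (M.i e)) (pbar e)

/-- `Λ ∈ Ẽ(M)` (asymptotic state): shift-invariant probability with `Λ(D) = 1` and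
`E_Λ(1_{_1[e]} | 𝓕) = (p̄_e ∘ F)·1_{T_{i(e)}}` `Λ`-a.e. for every `e`. -/
def IsAsymptotic (M : MarkovSystem K N E) (j0 : N) (xp : N → K) (pbar : E → K → ℝ)
    (Λ : Measure (CodeSpace E)) : Prop :=
  IsProbabilityMeasure Λ ∧ Measure.map (shiftMap E) Λ = Λ ∧
    Λ (M.codeDomain j0 xp) = 1 ∧
    ∀ e : E,
      (Λ[Set.indicator {σ : CodeSpace E | σ 1 = some e} (fun _ => (1 : ℝ)) | pastAlgebra E])
        =ᵐ[Λ] Set.indicator (M.Tset (M.i e)) (fun σ => pbar e (M.code j0 xp σ))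

/-- `Λ ∈ E_⊥(M)`: shift-invariant probability with `Λ(D) = 1` and
`E_Λ(1_{_1[e]} | 𝓕) = (∂p_e ∘ F)·1_{T_{i(e)}}` `Λ`-a.e. for every `e`. -/
def IsPerp (M : MarkovSystem K N E) (j0 : N) (xp : N → K) (pbar : E → K → ℝ)
    (Λ : Measure (CodeSpace E)) : Prop :=
  IsProbabilityMeasure Λ ∧ Measure.map (shiftMap E) Λ = Λ ∧
    Λ (M.codeDomain j0 xp) = 1 ∧
    ∀ e : E,
      (Λ[Set.indicator {σ : CodeSpace E | σ 1 = some e} (fun _ => (1 : ℝ)) | pastAlgebra E])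
        =ᵐ[Λ] Set.indicator (M.Tset (M.i e)) (fun σ => M.dp pbar e (M.code j0 xp σ))

/-- `G = ⋃_{k ≥ 0} ⋃_{j ∈ N} S^{-k}(F^{-1}(K_j) ∩ T_j)`. -/
def Gset (M : MarkovSystem K N E) (j0 : N) (xp : N → K) : Set (CodeSpace E) :=
  ⋃ (k : ℕ) (j : N), (shiftMap E)^[k] ⁻¹' ((M.code j0 xp) ⁻¹' (M.Kset j) ∩ M.Tset j)

/-- `M` is non-degenerate: for every asymptotic state `Λ` there is `i ∈ N` with
`Λ(T_i ∩ F^{-1}(K_i)) > 0`. -/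
def IsNonDegenerate (M : MarkovSystem K N E) (j0 : N) (xp : N → K) (pbar : E → K → ℝ) : Prop :=
  ∀ Λ : Measure (CodeSpace E), M.IsAsymptotic j0 xp pbar Λ →
    ∃ i : N, 0 < Λ (M.Tset i ∩ (M.code j0 xp) ⁻¹' (M.Kset i))

/-- `M` is consistent: `F(Λ) ∈ P(M)` for every asymptotic state `Λ`. -/
def IsConsistent (M : MarkovSystem K N E) (j0 : N) (xp : N → K) (pbar : E → K → ℝ) : Prop :=
  ∀ Λ : Measure (CodeSpace E), M.IsAsymptotic j0 xp pbar Λ →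
    M.IsInvariantMeasure (Measure.map (M.code j0 xp) Λ)

/-- `Rf = ∑_e ∂p_e · (f ∘ w̄_e)`. -/
def Rop (M : MarkovSystem K N E) (pbar : E → K → ℝ) (wb : E → K → K)
    (f : K → ℝ≥0∞) : K → ℝ≥0∞ :=
  fun x => ∑' e : E, ENNReal.ofReal (M.dp pbar e x) * f (wb e x)

/-- `Ω = ⋂_{n ≥ 1} {R^n 1 ≥ 1}`. -/
def OmegaSet (M : MarkovSystem K N E) (pbar : E → K → ℝ) (wb : E → K → K) : Set K :=
  ⋂ n : ℕ, {x : K | 1 ≤ (M.Rop pbar wb)^[n + 1] (fun _ => 1) x}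

/-- `ξ_j = ∑_{e, i(e) = j} sup_{x ∈ K_j} p_e(x)`. -/
def xi (M : MarkovSystem K N E) (j : N) : ℝ≥0∞ :=
  ∑' e : {e : E // M.i e = j}, ⨆ x ∈ M.Kset j, ENNReal.ofReal (M.p e.val x)

/-- `M` has a dominating Markov chain: `ξ_j < ∞` for all `j ∈ N`. -/
def HasDominatingChain (M : MarkovSystem K N E) : Prop := ∀ j : N, M.xi j ≠ ⊤

/-- `ξ_j · q_{j j'} = ∑_{e, i(e) = j, t(e) = j'} sup_{x ∈ K_j} p_e(x)`. -/
def xiq (M : MarkovSystem K N E) (j j' : N) : ℝ≥0∞ :=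
  ∑' e : {e : E // M.i e = j ∧ M.t e = j'}, ⨆ x ∈ M.Kset j, ENNReal.ofReal (M.p e.val x)

/-- `c = ∑_{j'} sup_j ξ_j q_{j j'}`. -/
def cConst (M : MarkovSystem K N E) : ℝ≥0∞ := ∑' j' : N, ⨆ j : N, M.xiq j j'

/-- `α^{x_0}_n({j}) = (1/n) ∑_{k=1}^n ((U*)^k δ_{x_0})(K_j)`. -/
def alphaMeas (M : MarkovSystem K N E) (x0 : K) (n : ℕ) (j : N) : ℝ≥0∞ :=
  (n : ℝ≥0∞)⁻¹ * ∑ k ∈ Finset.range n, (M.adjOp^[k + 1] (Measure.dirac x0)) (M.Kset j)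

/-- Condition (T) at `x_0`: the sequence `(α^{x_0}_n)_n` is uniformly tight. -/
def ConditionT (M : MarkovSystem K N E) (x0 : K) : Prop :=
  ∀ ε : ℝ, 0 < ε → ∃ V : Finset N,
    ∀ n : ℕ, (∑' j : {j : N // j ∉ V}, M.alphaMeas x0 (n + 1) j.val) < ENNReal.ofReal ε

/-- `M` is contractive with contraction rate `a`:
`∑_{e, i(e) = j} p_e(x) d(w_e x, w_e y) ≤ a·d(x, y)` on each `K_j`. -/
def IsContractive (M : MarkovSystem K N E) (a : ℝ) : Prop :=
  ∀ j : N, ∀ x ∈ M.Kset j, ∀ y ∈ M.Kset j,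
    (∑' e : {e : E // M.i e = j},
        ENNReal.ofReal (M.p e.val x * dist (M.w e.val x) (M.w e.val y)))
      ≤ ENNReal.ofReal (a * dist x y)

/-- `L(x) = ∑_j d(x, x_j)·1_{K_j}(x)`. -/
def Lfun (M : MarkovSystem K N E) (xp : N → K) : K → ℝ≥0∞ :=
  fun x => ∑' j : N, Set.indicator (M.Kset j) (fun y => ENNReal.ofReal (dist y (xp j))) x

/-- `b = sup_j sup_{x ∈ K_j} ∑_{e, i(e) = j} p_e(x)·d(w_e(x_{i(e)}), x_{t(e)})`. -/
def bConst (M : MarkovSystem K N E) (xp : N → K) : ℝ≥0∞ :=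
  ⨆ j : N, ⨆ x ∈ M.Kset j,
    ∑' e : {e : E // M.i e = j},
      ENNReal.ofReal (M.p e.val x * dist (M.w e.val (xp (M.i e.val))) (xp (M.t e.val)))

/-- `P^m_x` evaluated on a word: `p_{e_0}(x)·p_{e_1}(w_{e_0}x)·⋯`. -/
def wordProb (M : MarkovSystem K N E) : List (Option E) → K → ℝ
  | [], _ => 1
  | o :: rest, x => M.pext o x * M.wordProb rest (M.wext o x)

/-- `Λ = Φ(μ)`: `Λ` is a shift-invariant Borel probability measure with
`Λ(_m[e_m, …, e_n]) = ∫ P^m_x(_m[e_m, …, e_n]) dμ(x)` for all cylinders with `m ≤ 0`. -/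
def IsPhiOf (M : MarkovSystem K N E) (μ : Measure K) (Λ : Measure (CodeSpace E)) : Prop :=
  IsProbabilityMeasure Λ ∧ Measure.map (shiftMap E) Λ = Λ ∧
    ∀ m : ℤ, m ≤ 0 → ∀ es : List (Option E),
      Λ (cylSetL m es) = ∫⁻ x, ENNReal.ofReal (M.wordProb es x) ∂μ

/-- The (negative of the) energy function: `-u(σ) = -log p_{σ_1}(F(σ))` on `D`
(`+∞` if `p_{σ_1}(F(σ)) = 0`) and `+∞` off `D`, valued in `[0, ∞]`. -/
def negEnergy (M : MarkovSystem K N E) (j0 : N) (xp : N → K) (σ : CodeSpace E) : ℝ≥0∞ :=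
  if σ ∈ M.codeDomain j0 xp then
    (σ 1).elim ⊤ fun e =>
      if M.p e (M.code j0 xp σ) = 0 then ⊤
      else ENNReal.ofReal (-Real.log (M.p e (M.code j0 xp σ)))
  else ⊤

/-- The free energy `h_S(Λ) + ∫ u dΛ`, as an extended real number. -/
def freeEnergy (M : MarkovSystem K N E) (j0 : N) (xp : N → K)
    (Λ : Measure (CodeSpace E)) : EReal :=
  (entropyS Λ : EReal) - ((∫⁻ σ, M.negEnergy j0 xp σ ∂Λ : ℝ≥0∞) : EReal)

/-- `Λ₀ ∈ E(u)`: `Λ₀` is a thermodynamic equilibrium state for the energy function `u`. -/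
def IsEquilibriumForU (M : MarkovSystem K N E) (j0 : N) (xp : N → K)
    (Λ0 : Measure (CodeSpace E)) : Prop :=
  IsProbabilityMeasure Λ0 ∧ Measure.map (shiftMap E) Λ0 = Λ0 ∧ entropyS Λ0 ≠ ⊤ ∧
    M.freeEnergy j0 xp Λ0 =
      sSup {r : EReal | ∃ Λ : Measure (CodeSpace E),
        IsProbabilityMeasure Λ ∧ Measure.map (shiftMap E) Λ = Λ ∧ entropyS Λ ≠ ⊤ ∧
          r = M.freeEnergy j0 xp Λ}

end MarkovSystem

end

section WordSums

variable {E : Type*}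

/-- The sum of `g` over all words of length `n`. -/
noncomputable def wordSum (n : ℕ) (g : List E → ℝ≥0∞) : ℝ≥0∞ :=
  ∑' v : Fin n → E, g (List.ofFn v)

lemma wordSum_zero (g : List E → ℝ≥0∞) : wordSum 0 g = g [] := by
  simp [wordSum]

lemma wordSum_succ (n : ℕ) (g : List E → ℝ≥0∞) :
    wordSum (n + 1) g = ∑' e, wordSum n (fun w => g (e :: w)) := by
  unfold wordSum
  rw [← (Fin.consEquiv (fun _ : Fin (n + 1) => E)).tsum_eq, ENNReal.tsum_prod']
  simp [Fin.consEquiv]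

lemma wordSum_mono {n : ℕ} {f g : List E → ℝ≥0∞} (h : ∀ w, w.length = n → f w ≤ g w) :
    wordSum n f ≤ wordSum n g :=
  ENNReal.tsum_le_tsum fun v => h _ (by simp)

lemma wordSum_congr {n : ℕ} {f g : List E → ℝ≥0∞} (h : ∀ w, w.length = n → f w = g w) :
    wordSum n f = wordSum n g :=
  tsum_congr fun v => h _ (by simp)

lemma wordSum_add (n : ℕ) (f g : List E → ℝ≥0∞) :
    wordSum n (fun w => f w + g w) = wordSum n f + wordSum n g :=
  ENNReal.tsum_add

lemma wordSum_const_mul (n : ℕ) (c : ℝ≥0∞) (f : List E → ℝ≥0∞) :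
    wordSum n (fun w => c * f w) = c * wordSum n f :=
  ENNReal.tsum_mul_left

lemma wordSum_tsum_comm {ι : Type*} (n : ℕ) (f : ι → List E → ℝ≥0∞) :
    wordSum n (fun w => ∑' i, f i w) = ∑' i, wordSum n (f i) :=
  ENNReal.tsum_comm

lemma wordSum_append_left {lam : List E → ℝ≥0∞} (hl : ∀ w, ∑' e, lam (e :: w) = lam w)
    (p : ℕ) (u : List E) : wordSum p (fun l => lam (l ++ u)) = lam u := by
  induction p with
  | zero => simp [wordSum_zero]
  | succ p ih =>
    rw [wordSum_succ, ← wordSum_tsum_comm]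
    simp only [List.cons_append, hl, ih]

lemma wordSum_of_right_consistent {lam : List E → ℝ≥0∞}
    (hr : ∀ w, ∑' e, lam (w ++ [e]) = lam w) (r : ℕ) : wordSum r lam = lam [] := by
  induction r generalizing lam with
  | zero => simp [wordSum_zero]
  | succ r ih =>
    rw [wordSum_succ]
    have : ∀ e, wordSum r (fun w => lam (e :: w)) = lam [e] := fun e =>
      ih (lam := fun w => lam (e :: w)) fun w => hr (e :: w)
    simp only [this]
    exact hr []

lemma wordSum_prefix {lam : List E → ℝ≥0∞}
    (hr : ∀ w, ∑' e, lam (w ++ [e]) = lam w) (u : List E) (r : ℕ) :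
    wordSum (u.length + r) (fun w => if u <+: w then lam w else 0) = lam u := by
  induction u generalizing lam with
  | nil => simpa using wordSum_of_right_consistent hr r
  | cons a u ih =>
    rw [List.length_cons, Nat.add_right_comm, wordSum_succ, tsum_eq_single a]
    · simp only [List.cons_prefix_cons, true_and]
      exact ih (lam := fun w => lam (a :: w)) fun w => hr (a :: w)
    · intro e he
      simp [List.cons_prefix_cons, Ne.symm he, wordSum]

lemma wordSum_infix {lam : List E → ℝ≥0∞}
    (hr : ∀ w, ∑' e, lam (w ++ [e]) = lam w) (u : List E) (p r : ℕ) :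
    wordSum (p + (u.length + r)) (fun w => if u <+: w.drop p then lam w else 0)
      = wordSum p (fun l => lam (l ++ u)) := by
  induction p generalizing lam with
  | zero => simpa [wordSum_zero] using wordSum_prefix hr u r
  | succ p ih =>
    rw [Nat.add_right_comm, wordSum_succ, wordSum_succ]
    refine tsum_congr fun e => ?_
    simpa using ih (lam := fun w => lam (e :: w)) fun w => hr (e :: w)

end WordSums

section Extension

variable {E : Type*}

lemma cylSetL_nil (m : ℤ) : cylSetL m ([] : List (Option E)) = Set.univ := by
  simp [cylSetL]

lemma cylSetL_cons (m : ℤ) (o : Option E) (es : List (Option E)) :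
    cylSetL m (o :: es) = {σ | σ m = o} ∩ cylSetL (m + 1) es := by
  ext σ
  simp only [cylSetL, Set.mem_ofPred_eq, Set.mem_inter_iff, List.get_eq_getElem]
  constructor
  · intro h
    refine ⟨by simpa using h 0 (by simp), fun k hk => ?_⟩
    have := h (k + 1) (by simpa using hk)
    simp only [List.getElem_cons_succ] at this
    rw [← this]; congr 1; push_cast; ring
  · rintro ⟨h0, h⟩ k hk
    cases k with
    | zero => simpa using h0
    | succ k =>
      simp only [List.getElem_cons_succ]
      rw [← h k (by simpa using hk)]; congr 1; push_cast; ring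

lemma measurableSet_coord (k : ℤ) (o : Option E) :
    MeasurableSet {σ : CodeSpace E | σ k = o} :=
  (measurable_pi_apply k : Measurable fun σ : CodeSpace E => σ k)
    (MeasurableSpace.measurableSet_top (s := {o}))

lemma measurableSet_cylSetL (m : ℤ) (es : List (Option E)) : MeasurableSet (cylSetL m es) := by
  induction es generalizing m with
  | nil => simp [cylSetL_nil]
  | cons o es ih => rw [cylSetL_cons]; exact (measurableSet_coord m o).inter (ih _)

lemma exists_compact_topology_option (E : Type*) [Countable E] :
    ∃ t : TopologicalSpace (Option E), @CompactSpace _ t ∧ @T2Space _ t ∧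
      @SecondCountableTopology _ t ∧ ∀ e : E, @IsOpen _ t {some e} := by
  let : TopologicalSpace E := ⊥
  have : DiscreteTopology E := ⟨rfl⟩
  have hsing : ∀ e : E, IsOpen ({(e : OnePoint E)} : Set (OnePoint E)) := fun e => by
    have := OnePoint.isOpenEmbedding_coe.isOpenMap {e} (isOpen_discrete _)
    simpa using this
  refine ⟨(inferInstance : TopologicalSpace (OnePoint E)),
    (inferInstance : CompactSpace (OnePoint E)), (inferInstance : T2Space (OnePoint E)), ?_, hsing⟩
  have hbasis : TopologicalSpace.IsTopologicalBasis
      ((Set.range fun e : E => ({(e : OnePoint E)} : Set (OnePoint E))) ∪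
        Set.range fun s : Finset E => ((fun e : E => (e : OnePoint E)) '' (s : Set E))ᶜ) := by
    refine TopologicalSpace.isTopologicalBasis_of_isOpen_of_nhds ?_ ?_
    · rintro u (⟨e, rfl⟩ | ⟨s, rfl⟩)
      · exact hsing e
      · exact ((s.finite_toSet.image _).isClosed).isOpen_compl
    · intro x u hx hu
      induction x using OnePoint.rec with
      | infty =>
        have := (OnePoint.isOpen_def.1 hu).1 hx
        refine ⟨_, Or.inr ⟨this.finite_of_discrete.toFinset, rfl⟩, by simp, ?_⟩
        intro y hy
        induction y using OnePoint.rec with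
        | infty => exact hx
        | coe e => by_contra h; exact hy ⟨e, by simpa using h, rfl⟩
      | coe e => exact ⟨_, Or.inl ⟨e, rfl⟩, rfl, by simpa using hx⟩
  exact hbasis.secondCountableTopology ((Set.countable_range _).union (Set.countable_range _))

/-- The word `w` written at the coordinates `-n, 1 - n, …`, padded by `∞`. -/
def padWord (n : ℕ) (w : List E) : CodeSpace E :=
  fun k => if 0 ≤ k + n then w[(k + n).toNat]? else none

lemma padWord_mem_cylSetL {n p : ℕ} {m : ℤ} (h : m + n = p) (w u : List E) :
    padWord n w ∈ cylSetL m (u.map some) ↔ u <+: w.drop p := by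
  rw [List.prefix_iff_getElem?]
  simp only [cylSetL, Set.mem_ofPred_eq, List.length_map, List.get_eq_getElem, List.getElem_map,
    padWord, List.getElem?_drop]
  refine forall₂_congr fun k hk => ?_
  have h1 : 0 ≤ m + k + n := by omega
  have h2 : (m + k + n).toNat = p + k := by omega
  rw [if_pos h1, h2]

/-- Consistent cylinder weights extend to a (shift-invariant) measure on the code space. -/
theorem exists_measure_of_consistent [Countable E] {lam : List E → ℝ≥0∞} (h0 : lam [] = 1)
    (hr : ∀ w, ∑' e, lam (w ++ [e]) = lam w) (hl : ∀ w, ∑' e, lam (e :: w) = lam w) :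
    ∃ Λ : Measure (CodeSpace E), IsProbabilityMeasure Λ ∧
      ∀ (m : ℤ) (w : List E), Λ (cylSetL m (w.map some)) = lam w := by
  obtain ⟨t, hc, ht2, hsc, hopen⟩ := exists_compact_topology_option E
  have : BorelSpace (Option E) := ⟨borel_eq_top_of_countable.symm⟩
  have hclopen : ∀ (m : ℤ) (w : List E), IsClopen (cylSetL m (w.map some)) := by
    intro m w
    induction w generalizing m with
    | nil => simpa [cylSetL_nil] using isClopen_univ
    | cons e w ih =>
      rw [List.map_cons, cylSetL_cons]
      have : IsClopen ({some e} : Set (Option E)) := ⟨isClosed_singleton, hopen e⟩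
      exact (this.preimage (continuous_apply m)).inter (ih (m + 1))
  let P : ℕ → Measure (CodeSpace E) := fun n =>
    Measure.sum fun v : Fin (2 * n + 1) → E =>
      lam (List.ofFn v) • Measure.dirac (padWord n (List.ofFn v))
  have hP : ∀ (n : ℕ) (A : Set (CodeSpace E)), MeasurableSet A →
      P n A = wordSum (2 * n + 1) fun w => if padWord n w ∈ A then lam w else 0 := by
    intro n A hA
    rw [Measure.sum_apply _ hA]
    refine tsum_congr fun v => ?_
    simp [Measure.dirac_apply' _ hA, Set.indicator_apply]
  have hPcyl : ∀ (m : ℤ) (w : List E) (n : ℕ), m.natAbs + w.length ≤ n →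
      P n (cylSetL m (w.map some)) = lam w := by
    intro m w n hn
    obtain ⟨p, hp⟩ : ∃ p : ℕ, m + n = p := ⟨(m + n).toNat, by omega⟩
    obtain ⟨r, hr'⟩ : ∃ r : ℕ, 2 * n + 1 = p + (w.length + r) :=
      ⟨2 * n + 1 - p - w.length, by omega⟩
    rw [hP _ _ (measurableSet_cylSetL _ _)]
    simp only [padWord_mem_cylSetL hp]
    rw [hr', wordSum_infix hr, wordSum_append_left hl]
  have hPprob : ∀ n, IsProbabilityMeasure (P n) := fun n => ⟨by
    have := hPcyl 0 [] n (by simp)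
    simpa [cylSetL_nil, h0] using this⟩
  let Q : ℕ → ProbabilityMeasure (CodeSpace E) := fun n => ⟨P n, hPprob n⟩
  let 𝒰 : Ultrafilter (ProbabilityMeasure (CodeSpace E)) := (hyperfilter ℕ).map Q
  have hlim : Tendsto Q (hyperfilter ℕ : Filter ℕ) (𝓝 𝒰.lim) := 𝒰.le_nhds_lim
  refine ⟨(𝒰.lim : ProbabilityMeasure (CodeSpace E)), inferInstance, fun m w => ?_⟩
  have h1 := ENNReal.tendsto_coe.2
    (ProbabilityMeasure.tendsto_measure_of_isClopen_of_tendsto hlim (hclopen m w))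
  simp only [ProbabilityMeasure.ennreal_coeFn_eq_coeFn_toMeasure] at h1
  refine tendsto_nhds_unique h1 (tendsto_const_nhds.congr' ?_)
  refine Nat.hyperfilter_le_atTop ?_
  filter_upwards [eventually_ge_atTop (m.natAbs + w.length)] with n hn
  exact (hPcyl m w n hn).symm

end Extension

section Windows

variable {E : Type*}

lemma mem_cylSetL_iff_of_mem {m : ℤ} {es : List (Option E)} {σ τ : CodeSpace E}
    (hσ : σ ∈ cylSetL m es) :
    τ ∈ cylSetL m es ↔ ∀ k : ℤ, m ≤ k → k < m + es.length → τ k = σ k := by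
  constructor
  · intro hτ k h1 h2
    obtain ⟨j, rfl⟩ : ∃ j : ℕ, k = m + j := ⟨(k - m).toNat, by omega⟩
    rw [hσ j (by omega), hτ j (by omega)]
  · intro h j hj
    rw [h _ (by omega) (by omega), hσ j hj]

lemma mem_cylSetL_ofFn (m : ℤ) (n : ℕ) (σ : CodeSpace E) :
    σ ∈ cylSetL m (List.ofFn fun i : Fin n => σ (m + i)) := by
  intro k hk
  simp

/-- The cylinder sets over the windows `[m n, m n + L n)`. -/
def windowCyl (E : Type*) (m : ℕ → ℤ) (L : ℕ → ℕ) : Set (Set (CodeSpace E)) :=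
  {A | ∃ (n : ℕ) (es : List (Option E)), es.length = L n ∧ A = cylSetL (m n) es}

lemma isPiSystem_windowCyl {m : ℕ → ℤ} {L : ℕ → ℕ} (hm : Antitone m)
    (hL : Monotone fun n => m n + L n) : IsPiSystem (windowCyl E m L) := by
  have key : ∀ n n' : ℕ, n ≤ n' → ∀ es es' : List (Option E), es.length = L n →
      es'.length = L n' → (cylSetL (m n) es ∩ cylSetL (m n') es').Nonempty →
      cylSetL (m n') es' ⊆ cylSetL (m n) es := by
    rintro n n' hn es es' h h' ⟨σ, hσ, hσ'⟩ τ hτ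
    rw [mem_cylSetL_iff_of_mem hσ]
    intro k h1 h2
    have a := hm hn
    have b := hL hn
    dsimp only at b
    exact (mem_cylSetL_iff_of_mem hσ').1 hτ k (by omega) (by omega)
  rintro _ ⟨n, es, h, rfl⟩ _ ⟨n', es', h', rfl⟩ hne
  rcases le_total n n' with hn | hn
  · rw [Set.inter_eq_right.2 (key n n' hn es es' h h' hne)]
    exact ⟨n', es', h', rfl⟩
  · rw [Set.inter_eq_left.2 (key n' n hn es' es h' h (Set.inter_comm _ _ ▸ hne))]
    exact ⟨n, es, h, rfl⟩

lemma measurable_of_window [Countable E] {β : Type*} [MeasurableSpace β] {m : ℕ → ℤ} {L : ℕ → ℕ}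
    {f : CodeSpace E → β} (n : ℕ)
    (hf : ∀ σ τ : CodeSpace E, (∀ k : ℤ, m n ≤ k → k < m n + L n → σ k = τ k) → f σ = f τ) :
    @Measurable _ _ (MeasurableSpace.generateFrom (windowCyl E m L)) _ f := by
  intro s _
  have : f ⁻¹' s = ⋃ v ∈ {v : Fin (L n) → Option E | ∃ σ, f σ ∈ s ∧
      v = fun i : Fin (L n) => σ (m n + i)}, cylSetL (m n) (List.ofFn v) := by
    ext τ
    simp only [Set.mem_preimage, Set.mem_iUnion, Set.mem_ofPred_eq, exists_prop]
    constructor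
    · intro hτ
      exact ⟨_, ⟨τ, hτ, rfl⟩, mem_cylSetL_ofFn _ _ _⟩
    · rintro ⟨_, ⟨σ, hσ, rfl⟩, hτ⟩
      rw [hf τ σ fun k h1 h2 => (mem_cylSetL_iff_of_mem (mem_cylSetL_ofFn _ _ _)).1 hτ k h1
        (by simpa using h2)]
      exact hσ
  rw [this]
  refine MeasurableSet.biUnion (Set.to_countable _) fun v _ =>
    MeasurableSpace.measurableSet_generateFrom ⟨n, _, by simp, rfl⟩

lemma pastAlgebra_eq_generateFrom :
    pastAlgebra E = MeasurableSpace.generateFrom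
      (windowCyl E (fun n => -(n : ℤ)) (fun n => n + 1)) := by
  unfold pastAlgebra
  congr 1
  ext A
  constructor
  · rintro ⟨es, hes, rfl⟩
    have := List.length_pos_iff.2 hes
    refine ⟨es.length - 1, es, by dsimp only; omega, ?_⟩
    congr 1
    dsimp only
    omega
  · rintro ⟨n, es, h, rfl⟩
    refine ⟨es, by rintro rfl; simp at h, ?_⟩
    congr 1
    rw [h]; push_cast; ring

lemma pastAlgebra_le : pastAlgebra E ≤ MeasurableSpace.pi := by
  refine MeasurableSpace.generateFrom_le ?_
  rintro _ ⟨es, _, rfl⟩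
  exact measurableSet_cylSetL _ _

lemma measurable_past_of_window [Countable E] {β : Type*} [MeasurableSpace β]
    {f : CodeSpace E → β} (n : ℕ)
    (hf : ∀ σ τ : CodeSpace E, (∀ k : ℕ, k ≤ n → σ (-(k : ℤ)) = τ (-(k : ℤ))) → f σ = f τ) :
    Measurable[pastAlgebra E] f := by
  rw [pastAlgebra_eq_generateFrom]
  refine measurable_of_window n fun σ τ h => hf σ τ fun k hk => h _ (by omega) ?_
  push_cast; omega

lemma measure_eq_on_past {μ ν : Measure (CodeSpace E)} [IsFiniteMeasure μ]
    (h : ∀ (n : ℕ) (es : List (Option E)), es.length = n + 1 →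
      μ (cylSetL (-(n : ℤ)) es) = ν (cylSetL (-(n : ℤ)) es))
    (huniv : μ Set.univ = ν Set.univ) {s : Set (CodeSpace E)} (hs : MeasurableSet[pastAlgebra E] s) :
    μ s = ν s := by
  refine ext_on_measurableSpace_of_generate_finite _ _ ?_ pastAlgebra_le
    pastAlgebra_eq_generateFrom (isPiSystem_windowCyl ?_ ?_) huniv hs
  · rintro _ ⟨n, es, hes, rfl⟩
    exact h n es hes
  · intro a b hab; dsimp only; omega
  · intro a b hab; dsimp only; push_cast; omega

lemma measure_ext_of_window [Countable E] {μ ν : Measure (CodeSpace E)} [IsFiniteMeasure μ]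
    (h : ∀ (n : ℕ) (es : List (Option E)), es.length = 2 * n + 1 →
      μ (cylSetL (-(n : ℤ)) es) = ν (cylSetL (-(n : ℤ)) es))
    (huniv : μ Set.univ = ν Set.univ) : μ = ν := by
  refine ext_of_generate_finite (windowCyl E (fun n => -(n : ℤ)) (fun n => 2 * n + 1)) ?_
    (isPiSystem_windowCyl ?_ ?_) ?_ huniv
  · refine le_antisymm ?_ ?_
    · refine iSup_le fun k => ?_
      rw [MeasurableSpace.comap_le_iff_le_map]
      intro s _
      have : @Measurable _ _ (MeasurableSpace.generateFrom
          (windowCyl E (fun n => -(n : ℤ)) (fun n => 2 * n + 1))) _ fun σ : CodeSpace E => σ k := by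
        refine measurable_of_window k.natAbs fun σ τ h => h k ?_ ?_
        · push_cast; exact neg_abs_le k
        · push_cast; linarith [le_abs_self k, abs_nonneg k]
      exact this (MeasurableSpace.measurableSet_top (s := s))
    · refine MeasurableSpace.generateFrom_le ?_
      rintro _ ⟨n, es, _, rfl⟩
      exact measurableSet_cylSetL _ _
  · intro a b hab; dsimp only; omega
  · intro a b hab; dsimp only; push_cast; omega
  · rintro _ ⟨n, es, hes, rfl⟩
    exact h n es hes

lemma measurable_shiftMap : Measurable (shiftMap E) :=
  measurable_pi_lambda _ fun k => measurable_pi_apply (k + 1)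

lemma shiftMap_preimage_cylSetL (m : ℤ) (es : List (Option E)) :
    shiftMap E ⁻¹' cylSetL m es = cylSetL (m + 1) es := by
  ext σ
  simp only [cylSetL, shiftMap, Set.mem_preimage, Set.mem_ofPred_eq]
  refine forall₂_congr fun k hk => ?_
  rw [add_right_comm]

lemma lintegral_eq_wordSum [Countable E] {Λ : Measure (CodeSpace E)}
    (hΛ : ∀ k : ℤ, Λ {σ | σ k = none} = 0) (n : ℕ) (m : ℤ) (f : CodeSpace E → ℝ≥0∞) :
    ∫⁻ σ, f σ ∂Λ = wordSum n fun w => ∫⁻ σ in cylSetL m (w.map some), f σ ∂Λ := by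
  induction n generalizing m Λ with
  | zero => simp [wordSum_zero, cylSetL_nil]
  | succ n ih =>
    rw [wordSum_succ]
    have h1 : ∀ e : E, wordSum n (fun w => ∫⁻ σ in cylSetL m ((e :: w).map some), f σ ∂Λ)
        = ∫⁻ σ in {σ | σ m = some e}, f σ ∂Λ := by
      intro e
      rw [ih (Λ := Λ.restrict {σ | σ m = some e})
        (fun k => le_antisymm ((Measure.restrict_apply_le _ _).trans (hΛ k).le) bot_le) (m + 1)]
      refine wordSum_congr fun w _ => ?_
      rw [List.map_cons, cylSetL_cons, Measure.restrict_restrict (measurableSet_cylSetL _ _),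
        Set.inter_comm]
    simp only [h1]
    rw [← lintegral_iUnion (fun e => measurableSet_coord m (some e))]
    · rw [← setLIntegral_univ]
      refine setLIntegral_congr (eventuallyEq_set.2 ?_)
      have : ∀ᵐ σ ∂Λ, σ m ≠ none := by simpa [ae_iff] using hΛ m
      filter_upwards [this] with σ hσ
      simpa [eq_comm] using Option.ne_none_iff_exists.1 hσ
    · intro e e' hne
      refine Set.disjoint_left.2 fun σ h h' => hne ?_
      exact Option.some_injective _ (h.symm.trans h')

lemma exists_map_some {es : List (Option E)} (h : none ∉ es) : ∃ w : List E, es = w.map some := by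
  induction es with
  | nil => exact ⟨[], rfl⟩
  | cons o es ih =>
    obtain ⟨w, rfl⟩ := ih fun h' => h (List.mem_cons_of_mem _ h')
    cases o with
    | none => simp at h
    | some e => exact ⟨e :: w, rfl⟩

lemma measure_cylSetL_eq_zero {Λ : Measure (CodeSpace E)} (hΛ : ∀ k : ℤ, Λ {σ | σ k = none} = 0)
    (m : ℤ) {es : List (Option E)} (h : none ∈ es) : Λ (cylSetL m es) = 0 := by
  obtain ⟨k, hk, hk'⟩ := List.getElem_of_mem h
  refine measure_mono_null (fun σ hσ => ?_) (hΛ (m + k))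
  exact (hσ k hk).trans hk'

lemma measure_coord_none_eq_zero [Countable E] {Λ : Measure (CodeSpace E)} [IsProbabilityMeasure Λ]
    {lam : List E → ℝ≥0∞} (h1 : ∑' e, lam [e] = 1)
    (hcyl : ∀ (m : ℤ) (w : List E), Λ (cylSetL m (w.map some)) = lam w) (k : ℤ) :
    Λ {σ | σ k = none} = 0 := by
  have h2 : Λ (⋃ e : E, {σ | σ k = some e}) = 1 := by
    rw [measure_iUnion _ fun e => measurableSet_coord k (some e), ← h1]
    · refine tsum_congr fun e => ?_
      rw [← hcyl k [e], List.map_cons, List.map_nil, cylSetL_cons, cylSetL_nil, Set.inter_univ]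
    · intro e e' hne
      refine Set.disjoint_left.2 fun σ h h' => hne ?_
      exact Option.some_injective _ (h.symm.trans h')
  rw [← prob_compl_eq_zero_iff (MeasurableSet.iUnion fun e => measurableSet_coord k (some e))] at h2
  refine measure_mono_null (fun σ hσ => ?_) h2
  simp only [Set.mem_ofPred_eq] at hσ
  simp [hσ]

lemma map_shiftMap_eq [Countable E] {Λ : Measure (CodeSpace E)} [IsProbabilityMeasure Λ]
    {lam : List E → ℝ≥0∞} (hΛ : ∀ k : ℤ, Λ {σ | σ k = none} = 0)
    (hcyl : ∀ (m : ℤ) (w : List E), Λ (cylSetL m (w.map some)) = lam w) :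
    Measure.map (shiftMap E) Λ = Λ := by
  have := Measure.isProbabilityMeasure_map (μ := Λ) (measurable_shiftMap (E := E)).aemeasurable
  refine measure_ext_of_window (fun n es _ => ?_) (by simp)
  rw [Measure.map_apply measurable_shiftMap (measurableSet_cylSetL _ _), shiftMap_preimage_cylSetL]
  by_cases h : none ∈ es
  · rw [measure_cylSetL_eq_zero hΛ _ h, measure_cylSetL_eq_zero hΛ _ h]
  · obtain ⟨w, rfl⟩ := exists_map_some h
    rw [hcyl, hcyl]

end Windows

section CondExp

variable {E : Type*}

lemma condExp_coord_ae_eq_iff {Λ : Measure (CodeSpace E)} [IsProbabilityMeasure Λ] (e : E)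
    {g : CodeSpace E → ℝ} (hg : Measurable[pastAlgebra E] g) (hg0 : ∀ σ, 0 ≤ g σ)
    (hg1 : ∀ σ, g σ ≤ 1) :
    (Λ[Set.indicator {σ : CodeSpace E | σ 1 = some e} (fun _ => (1 : ℝ)) | pastAlgebra E])
        =ᵐ[Λ] g ↔
      ∀ s, MeasurableSet[pastAlgebra E] s →
        Λ (s ∩ {σ | σ 1 = some e}) = ∫⁻ σ in s, ENNReal.ofReal (g σ) ∂Λ := by
  have hE : MeasurableSet {σ : CodeSpace E | σ 1 = some e} := measurableSet_coord 1 (some e)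
  have hint : Integrable (Set.indicator {σ : CodeSpace E | σ 1 = some e} (fun _ => (1 : ℝ))) Λ :=
    (integrable_const 1).indicator hE
  have hgm : Measurable g := hg.mono pastAlgebra_le le_rfl
  have hgint : Integrable g Λ := by
    refine Integrable.of_bound hgm.aestronglyMeasurable 1 (ae_of_all _ fun σ => ?_)
    rw [Real.norm_eq_abs, abs_of_nonneg (hg0 σ)]
    exact hg1 σ
  have hl : ∀ s : Set (CodeSpace E), ∫ σ in s, Set.indicator {σ : CodeSpace E | σ 1 = some e}
      (fun _ => (1 : ℝ)) σ ∂Λ = (Λ (s ∩ {σ | σ 1 = some e})).toReal := by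
    intro s
    rw [integral_indicator hE, integral_const, smul_eq_mul, mul_one, Measure.restrict_restrict hE,
      measureReal_restrict_apply_univ, Set.inter_comm, Measure.real]
  have hr : ∀ s : Set (CodeSpace E), ∫ σ in s, g σ ∂Λ
      = (∫⁻ σ in s, ENNReal.ofReal (g σ) ∂Λ).toReal := fun s =>
    integral_eq_lintegral_of_nonneg_ae (ae_of_all _ hg0) hgm.aestronglyMeasurable
  have hfin : ∀ s : Set (CodeSpace E), ∫⁻ σ in s, ENNReal.ofReal (g σ) ∂Λ ≠ ⊤ := fun s =>
    (hgint.integrableOn (s := s)).lintegral_lt_top.ne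
  constructor
  · intro h s hs
    have h1 := setIntegral_condExp (μ := Λ) pastAlgebra_le hint hs
    rw [setIntegral_congr_ae (g := g) (pastAlgebra_le s hs) (h.mono fun σ hσ _ => hσ), hl, hr] at h1
    exact ((ENNReal.toReal_eq_toReal_iff' (hfin s) (measure_ne_top _ _)).1 h1).symm
  · intro h
    refine (ae_eq_condExp_of_forall_setIntegral_eq pastAlgebra_le hint
      (fun s _ _ => hgint.integrableOn) (fun s hs _ => ?_)
      hg.stronglyMeasurable.aestronglyMeasurable).symm
    rw [hl, hr, h s hs]

lemma lintegral_coord_of_density {Λ : Measure (CodeSpace E)} [IsFiniteMeasure Λ] {e : E}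
    {g : CodeSpace E → ℝ≥0∞} (hg : Measurable g)
    (h : ∀ s, MeasurableSet[pastAlgebra E] s →
      Λ (s ∩ {σ | σ 1 = some e}) = ∫⁻ σ in s, g σ ∂Λ)
    {f : CodeSpace E → ℝ≥0∞} (hf : Measurable[pastAlgebra E] f) :
    ∫⁻ σ in {σ | σ 1 = some e}, f σ ∂Λ = ∫⁻ σ, g σ * f σ ∂Λ := by
  have h1 : (Λ.restrict {σ | σ 1 = some e}).trim pastAlgebra_le
      = (Λ.withDensity g).trim pastAlgebra_le := by
    refine @Measure.ext _ (pastAlgebra E) _ _ fun s hs => ?_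
    have hs' := pastAlgebra_le s hs
    rw [trim_measurableSet_eq _ hs, trim_measurableSet_eq _ hs, Measure.restrict_apply hs',
      withDensity_apply _ hs', h s hs]
  rw [← lintegral_trim pastAlgebra_le hf, h1, lintegral_trim pastAlgebra_le hf,
    lintegral_withDensity_eq_lintegral_mul _ hg (hf.mono pastAlgebra_le le_rfl)]
  rfl

end CondExp

namespace MarkovSystem

variable {K : Type*} [MetricSpace K] [MeasurableSpace K] {N E : Type*}
  (M : MarkovSystem K N E) (j0 : N) (xp : N → K)

lemma iterW_congr {σ τ : CodeSpace E} (n : ℕ)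
    (h : ∀ k : ℕ, k ≤ n → σ (-(k : ℤ)) = τ (-(k : ℤ))) (y : K) :
    M.iterW σ n y = M.iterW τ n y := by
  induction n generalizing y with
  | zero => simpa [iterW] using congrArg (fun o => M.wext o y) (h 0 le_rfl)
  | succ n ih =>
    have := h (n + 1) le_rfl
    push_cast at this
    simp only [iterW]
    rw [this, ih fun k hk => h k (by omega)]

lemma orbit_congr {σ τ : CodeSpace E} (n : ℕ)
    (h : ∀ k : ℕ, k ≤ n → σ (-(k : ℤ)) = τ (-(k : ℤ))) :
    M.orbit j0 xp σ n = M.orbit j0 xp τ n := by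
  unfold orbit
  rw [h n le_rfl, M.iterW_congr n h]

lemma measurable_orbit [Countable E] {β : Type*} [MeasurableSpace β] (n : ℕ) (f : K → β) :
    Measurable[pastAlgebra E] fun σ => f (M.orbit j0 xp σ n) :=
  measurable_past_of_window n fun _ _ h => congrArg f (M.orbit_congr j0 xp n h)

/-- The limit of the backward orbits, where it exists; unlike the coding map it depends on the
past coordinates only. -/
noncomputable def limCode (σ : CodeSpace E) : K :=
  if h : ∃ l : K, Tendsto (fun n : ℕ => M.orbit j0 xp σ n) atTop (𝓝 l) then h.choose else xp j0

variable {M j0 xp} in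
lemma limCode_eq_of_tendsto {σ : CodeSpace E} {l : K}
    (h : Tendsto (fun n : ℕ => M.orbit j0 xp σ n) atTop (𝓝 l)) : M.limCode j0 xp σ = l := by
  have h' : ∃ l : K, Tendsto (fun n : ℕ => M.orbit j0 xp σ n) atTop (𝓝 l) := ⟨l, h⟩
  rw [limCode, dif_pos h']
  exact tendsto_nhds_unique h'.choose_spec h

variable {M j0 xp} in
lemma tendsto_limCode {σ : CodeSpace E} (hσ : σ ∈ M.codeDomain j0 xp) :
    Tendsto (fun n : ℕ => M.orbit j0 xp σ n) atTop (𝓝 (M.limCode j0 xp σ)) := by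
  obtain ⟨l, hl⟩ := hσ.2
  rwa [limCode_eq_of_tendsto hl]

variable {M j0 xp} in
lemma code_eq_limCode {σ : CodeSpace E} (hσ : σ ∈ M.codeDomain j0 xp) :
    M.code j0 xp σ = M.limCode j0 xp σ := by
  rw [code, dif_pos hσ, limCode_eq_of_tendsto hσ.2.choose_spec]

lemma measurableSet_past_cauchySeq [Countable E] :
    MeasurableSet[pastAlgebra E] {σ | CauchySeq fun n : ℕ => M.orbit j0 xp σ n} := by
  have : {σ | CauchySeq fun n : ℕ => M.orbit j0 xp σ n} = ⋂ k : ℕ, ⋃ n0 : ℕ, ⋂ n : ℕ, ⋂ _ : n0 ≤ n,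
      {σ | dist (M.orbit j0 xp σ n) (M.orbit j0 xp σ n0) < 1 / ((k : ℝ) + 1)} := by
    ext σ
    simp only [Set.mem_ofPred_eq, Set.mem_iInter, Set.mem_iUnion, Metric.cauchySeq_iff']
    constructor
    · intro h k
      obtain ⟨n0, h0⟩ := h (1 / ((k : ℝ) + 1)) (by positivity)
      exact ⟨n0, h0⟩
    · intro h ε hε
      obtain ⟨k, hk⟩ := exists_nat_one_div_lt hε
      obtain ⟨n0, h0⟩ := h k
      exact ⟨n0, fun n hn => (h0 n hn).trans hk⟩
  rw [this]
  refine MeasurableSet.iInter fun k => MeasurableSet.iUnion fun n0 => MeasurableSet.iInter fun n =>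
    MeasurableSet.iInter fun hn => ?_
  refine @measurableSet_setOfPred _ (pastAlgebra E) _ |>.2 ?_
  refine measurable_past_of_window n fun σ τ h => ?_
  rw [M.orbit_congr j0 xp n h, M.orbit_congr j0 xp n0 fun k hk => h k (hk.trans hn)]

lemma measurable_limCode [Countable E] [CompleteSpace K] [BorelSpace K] :
    Measurable[pastAlgebra E] (M.limCode j0 xp) := by
  refine @measurable_of_tendsto_metrizable _ _ (pastAlgebra E) _ _ _ _
    (fun n σ => if CauchySeq (fun n : ℕ => M.orbit j0 xp σ n) then M.orbit j0 xp σ n else xp j0)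
    _ (fun n => ?_) ?_
  · exact Measurable.ite (M.measurableSet_past_cauchySeq j0 xp) (M.measurable_orbit j0 xp n id)
      measurable_const
  · rw [tendsto_pi_nhds]
    intro σ
    by_cases h : CauchySeq fun n : ℕ => M.orbit j0 xp σ n
    · obtain ⟨l, hl⟩ := cauchySeq_tendsto_of_complete h
      simpa [h, limCode_eq_of_tendsto hl] using hl
    · have : ¬ ∃ l : K, Tendsto (fun n : ℕ => M.orbit j0 xp σ n) atTop (𝓝 l) :=
        fun ⟨l, hl⟩ => h hl.cauchySeq
      simp [h, limCode, this]

lemma measurableSet_pathSpace [Countable E] : MeasurableSet M.pathSpace := by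
  have : M.pathSpace = ⋂ n : ℤ, ⋃ e : E, ⋃ e' : E, ⋃ _ : M.i e' = M.t e,
      {σ : CodeSpace E | σ n = some e} ∩ {σ | σ (n + 1) = some e'} := by
    ext σ
    simp only [pathSpace, Set.mem_ofPred_eq, Set.mem_iInter, Set.mem_iUnion, Set.mem_inter_iff,
      exists_prop]
    refine forall_congr' fun n => exists_congr fun e => exists_congr fun e' => ?_
    tauto
  rw [this]
  exact MeasurableSet.iInter fun n => MeasurableSet.iUnion fun e => MeasurableSet.iUnion fun e' =>
    MeasurableSet.iUnion fun _ => (measurableSet_coord _ _).inter (measurableSet_coord _ _)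

lemma measurableSet_codeDomain [Countable E] [CompleteSpace K] :
    MeasurableSet (M.codeDomain j0 xp) := by
  have : M.codeDomain j0 xp = M.pathSpace ∩ {σ | CauchySeq fun n : ℕ => M.orbit j0 xp σ n} := by
    ext σ
    refine and_congr_right fun _ => ⟨fun ⟨l, hl⟩ => hl.cauchySeq, cauchySeq_tendsto_of_complete⟩
  rw [this]
  exact M.measurableSet_pathSpace.inter (pastAlgebra_le _ (M.measurableSet_past_cauchySeq j0 xp))

variable {M j0 xp} in
lemma ae_mem_codeDomain [Countable E] [CompleteSpace K] {Λ : Measure (CodeSpace E)}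
    [IsProbabilityMeasure Λ] (h : Λ (M.codeDomain j0 xp) = 1) :
    ∀ᵐ σ ∂Λ, σ ∈ M.codeDomain j0 xp :=
  (mem_ae_iff_prob_eq_one (M.measurableSet_codeDomain j0 xp)).2 h

lemma iterW_shiftMap (σ : CodeSpace E) (n : ℕ) (y : K) :
    M.iterW (shiftMap E σ) (n + 1) y = M.wext (σ 1) (M.iterW σ n y) := by
  induction n generalizing y with
  | zero => simp [iterW, shiftMap]
  | succ n ih =>
    rw [iterW, ih]
    conv_rhs => rw [iterW]
    have : shiftMap E σ (-(((n + 1 : ℕ) : ℤ) + 1)) = σ (-((n : ℤ) + 1)) := by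
      unfold shiftMap; congr 1
    rw [this]

lemma orbit_shiftMap (σ : CodeSpace E) (n : ℕ) :
    M.orbit j0 xp (shiftMap E σ) (n + 1) = M.wext (σ 1) (M.orbit j0 xp σ n) := by
  unfold orbit
  rw [iterW_shiftMap]
  have : shiftMap E σ (-((n + 1 : ℕ) : ℤ)) = σ (-(n : ℤ)) := by
    unfold shiftMap; congr 1; push_cast; ring
  rw [this]

variable {M} in
lemma iterW_mem {σ : CodeSpace E} (hσ : σ ∈ M.pathSpace) {e e' : E} {n : ℕ}
    (he : σ (-(n : ℤ)) = some e') (h0 : σ 0 = some e) {y : K} (hy : y ∈ M.Kset (M.i e')) :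
    M.iterW σ n y ∈ M.Kset (M.t e) := by
  induction n generalizing e' y with
  | zero =>
    obtain rfl : e' = e := by simpa [h0, eq_comm] using he
    simpa [iterW, wext, h0] using M.w_mapsTo e' hy
  | succ n ih =>
    obtain ⟨e1, e2, h1, h2, h12⟩ := hσ (-((n + 1 : ℕ) : ℤ))
    obtain rfl : e' = e1 := Option.some_injective _ (he.symm.trans h1)
    have h3 : -((n + 1 : ℕ) : ℤ) + 1 = -(n : ℤ) := by push_cast; ring
    rw [h3] at h2
    rw [iterW]
    refine ih h2 ?_
    rw [h12]
    rw [Nat.cast_succ] at he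
    rw [he]
    exact M.w_mapsTo e' hy

variable {M j0 xp} in
lemma orbit_mem (hxp : ∀ j, xp j ∈ M.Kset j) {σ : CodeSpace E} (hσ : σ ∈ M.pathSpace) {e : E}
    (h0 : σ 0 = some e) (n : ℕ) : M.orbit j0 xp σ n ∈ M.Kset (M.t e) := by
  obtain ⟨e1, _, h1, _⟩ := hσ (-(n : ℤ))
  refine iterW_mem hσ h1 h0 ?_
  simpa [h1, iext] using hxp (M.i e1)

variable {M j0 xp} in
/-- The equivariance `F (S σ) = w_{σ_1} (F σ)`. -/
lemma limCode_shiftMap (hxp : ∀ j, xp j ∈ M.Kset j) (huc : M.IsUniformlyContinuous)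
    {σ : CodeSpace E} (hσ : σ ∈ M.codeDomain j0 xp) {e : E} (h1 : σ 1 = some e)
    (hF : M.limCode j0 xp σ ∈ M.Kset (M.i e)) :
    M.limCode j0 xp (shiftMap E σ) = M.w e (M.limCode j0 xp σ) := by
  refine limCode_eq_of_tendsto ((tendsto_add_atTop_iff_nat 1).1 ?_)
  simp only [orbit_shiftMap, h1]
  obtain ⟨e0, e1, h0, h1', h01⟩ := hσ.1 0
  obtain rfl : e = e1 := by simpa [h1] using h1'
  refine ((huc e).1.continuousOn _ hF).tendsto.comp (tendsto_nhdsWithin_iff.2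
    ⟨tendsto_limCode hσ, Eventually.of_forall fun n => ?_⟩)
  rw [h01]
  exact orbit_mem hxp hσ.1 h0 n

end MarkovSystem

namespace MarkovSystem

variable {K : Type*} [MetricSpace K] [MeasurableSpace K] {N E : Type*} (M : MarkovSystem K N E)

section Operator

lemma exists_mem_Kset (x : K) : ∃ j, x ∈ M.Kset j := by
  have : x ∈ ⋃ j, M.Kset j := M.Kset_cover ▸ Set.mem_univ x
  simpa using this

variable {M} in
lemma eq_of_mem_Kset {x : K} {j j' : N} (h : x ∈ M.Kset j) (h' : x ∈ M.Kset j') : j = j' := by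
  by_contra hne
  exact Set.disjoint_left.1 (M.Kset_disjoint hne) h h'

variable {M} in
lemma mem_Kset_of_p_ne_zero {e : E} {x : K} (h : M.p e x ≠ 0) : x ∈ M.Kset (M.i e) := by
  by_contra hx
  exact h (M.p_zero_outside e x hx)

/-- A sum over the edges leaving `j` extends to all edges at points of `K_j`. -/
lemma tsum_p_mul_eq {j : N} {x : K} (hx : x ∈ M.Kset j) (f : E → ℝ≥0∞) :
    ∑' e, ENNReal.ofReal (M.p e x) * f e
      = ∑' e : {e : E // M.i e = j}, ENNReal.ofReal (M.p e.val x) * f e.val := by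
  symm
  refine tsum_subtype_eq_of_support_subset (s := {e : E | M.i e = j})
    (f := fun e => ENNReal.ofReal (M.p e x) * f e) ?_
  intro e he
  have hp : M.p e x ≠ 0 := fun h0 => he (by simp [h0])
  exact eq_of_mem_Kset (mem_Kset_of_p_ne_zero hp) hx

lemma tsum_p (x : K) : ∑' e, ENNReal.ofReal (M.p e x) = 1 := by
  obtain ⟨j, hj⟩ := M.exists_mem_Kset x
  have h := M.tsum_p_mul_eq hj (fun _ => 1)
  simp only [mul_one] at h
  have hs : Summable fun e : {e : E // M.i e = j} => M.p e.val x := by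
    by_contra hs
    have := M.p_tsum_one j x hj
    rw [tsum_eq_zero_of_not_summable hs] at this
    exact zero_ne_one this
  rw [h, ← ENNReal.ofReal_tsum_of_nonneg (fun e => M.p_nonneg _ _) hs, M.p_tsum_one j x hj,
    ENNReal.ofReal_one]

lemma markovOp_const (c : ℝ≥0∞) : M.markovOp (fun _ => c) = fun _ => c := by
  funext x
  simp [markovOp, ENNReal.tsum_mul_right, M.tsum_p]

lemma markovOp_mono : Monotone M.markovOp := fun _ _ h x =>
  ENNReal.tsum_le_tsum fun e => mul_le_mul_right (h (M.w e x)) _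

lemma markovOp_add (f g : K → ℝ≥0∞) : M.markovOp (f + g) = M.markovOp f + M.markovOp g := by
  funext x
  simp [markovOp, mul_add, ENNReal.tsum_add]

lemma markovOp_const_mul (c : ℝ≥0∞) (f : K → ℝ≥0∞) :
    M.markovOp (fun x => c * f x) = fun x => c * M.markovOp f x := by
  funext x
  simp only [markovOp, ← ENNReal.tsum_mul_left]
  exact tsum_congr fun e => mul_left_comm _ _ _

lemma markovOp_tsum {ι : Type*} (f : ι → K → ℝ≥0∞) :
    M.markovOp (fun x => ∑' i, f i x) = fun x => ∑' i, M.markovOp (f i) x := by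
  funext x
  simp only [markovOp, ← ENNReal.tsum_mul_left]
  exact ENNReal.tsum_comm

lemma iterate_markovOp_mono (k : ℕ) : Monotone M.markovOp^[k] := M.markovOp_mono.iterate k

lemma iterate_markovOp_const (k : ℕ) (c : ℝ≥0∞) : M.markovOp^[k] (fun _ => c) = fun _ => c :=
  Function.iterate_fixed (M.markovOp_const c) k

lemma iterate_markovOp_add (k : ℕ) (f g : K → ℝ≥0∞) :
    M.markovOp^[k] (f + g) = M.markovOp^[k] f + M.markovOp^[k] g := by
  induction k with
  | zero => rfl
  | succ k ih => simp only [Function.iterate_succ_apply', ih, markovOp_add]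

lemma iterate_markovOp_const_mul (k : ℕ) (c : ℝ≥0∞) (f : K → ℝ≥0∞) :
    M.markovOp^[k] (fun x => c * f x) = fun x => c * M.markovOp^[k] f x := by
  induction k with
  | zero => rfl
  | succ k ih => simp only [Function.iterate_succ_apply', ih, markovOp_const_mul]

lemma iterate_markovOp_tsum {ι : Type*} (k : ℕ) (f : ι → K → ℝ≥0∞) :
    M.markovOp^[k] (fun x => ∑' i, f i x) = fun x => ∑' i, M.markovOp^[k] (f i) x := by
  induction k with
  | zero => rfl
  | succ k ih => simp only [Function.iterate_succ_apply', ih, markovOp_tsum]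

lemma measurable_ofReal_p (e : E) : Measurable fun x => ENNReal.ofReal (M.p e x) :=
  (M.p_measurable e).ennreal_ofReal

lemma measurable_markovOp [Countable E] {f : K → ℝ≥0∞} (hf : Measurable f) :
    Measurable (M.markovOp f) :=
  Measurable.tsum fun e => (M.measurable_ofReal_p e).mul (hf.comp (M.w_measurable e))

lemma lintegral_adjOp (ν : Measure K) {f : K → ℝ≥0∞} (hf : Measurable f) [Countable E] :
    ∫⁻ x, f x ∂(M.adjOp ν) = ∫⁻ x, M.markovOp f x ∂ν := by
  unfold adjOp markovOp
  have hm : ∀ e, AEMeasurable (fun x => ENNReal.ofReal (M.p e x) * f (M.w e x)) ν := fun e =>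
    ((M.measurable_ofReal_p e).mul (hf.comp (M.w_measurable e))).aemeasurable
  rw [lintegral_sum_measure, lintegral_tsum hm]
  refine tsum_congr fun e => ?_
  rw [lintegral_map hf (M.w_measurable e)]
  exact lintegral_withDensity_eq_lintegral_mul _ (M.measurable_ofReal_p e)
    (hf.comp (M.w_measurable e))

lemma lintegral_iterate_adjOp [Countable E] (k : ℕ) (ν : Measure K) {f : K → ℝ≥0∞}
    (hf : Measurable f) :
    ∫⁻ x, f x ∂(M.adjOp^[k] ν) = ∫⁻ x, M.markovOp^[k] f x ∂ν := by
  induction k generalizing f with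
  | zero => rfl
  | succ k ih =>
    rw [Function.iterate_succ_apply', lintegral_adjOp _ _ hf, ih (M.measurable_markovOp hf)]
    rfl

lemma measurable_iterate_markovOp [Countable E] (k : ℕ) {f : K → ℝ≥0∞} (hf : Measurable f) :
    Measurable (M.markovOp^[k] f) := by
  induction k with
  | zero => exact hf
  | succ k ih => rw [Function.iterate_succ_apply']; exact M.measurable_markovOp ih

lemma iterate_adjOp_dirac [Countable E] (k : ℕ) (x : K) {A : Set K} (hA : MeasurableSet A) :
    (M.adjOp^[k] (Measure.dirac x)) A = M.markovOp^[k] (A.indicator 1) x := by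
  have h1 : Measurable (A.indicator (1 : K → ℝ≥0∞)) := measurable_one.indicator hA
  rw [← lintegral_indicator_one hA, M.lintegral_iterate_adjOp k _ h1,
    lintegral_dirac' _ (M.measurable_iterate_markovOp k h1)]

/-- The Cesàro averages `(n+1)⁻¹ ∑_{k=1}^{n+1} U^k f (x₀)`. -/
noncomputable def cesaro (x0 : K) (n : ℕ) (f : K → ℝ≥0∞) : ℝ≥0∞ :=
  ((n + 1 : ℕ) : ℝ≥0∞)⁻¹ * ∑ k ∈ Finset.range (n + 1), M.markovOp^[k + 1] f x0

/-- The indicator function of `⋃_{j ∉ V} K_j`. -/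
noncomputable def tailFun (V : Finset N) : K → ℝ≥0∞ :=
  fun x => ∑' j : {j : N // j ∉ V}, (M.Kset j.val).indicator 1 x

lemma tsum_alphaMeas [Countable E] (x0 : K) (n : ℕ) (V : Finset N) :
    ∑' j : {j : N // j ∉ V}, M.alphaMeas x0 (n + 1) j.val = M.cesaro x0 n (M.tailFun V) := by
  unfold alphaMeas cesaro
  rw [ENNReal.tsum_mul_left, Summable.tsum_finsetSum fun _ _ => ENNReal.summable]
  congr 1
  refine Finset.sum_congr rfl fun k _ => ?_
  unfold tailFun
  rw [iterate_markovOp_tsum]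
  exact tsum_congr fun j => M.iterate_adjOp_dirac _ _ (M.Kset_measurable _)

lemma conditionT_iff [Countable E] (x0 : K) : M.ConditionT x0 ↔
    ∀ ε : ℝ, 0 < ε → ∃ V : Finset N, ∀ n, M.cesaro x0 n (M.tailFun V) < ENNReal.ofReal ε := by
  simp only [ConditionT, tsum_alphaMeas]

end Operator

section MaximalInequality

/-- The positive parts of the maximal deviations of `∑_{k<n} U^k h` above `n c`. -/
noncomputable def maxDev (h : K → ℝ≥0∞) (c : ℝ≥0∞) : ℕ → K → ℝ≥0∞
  | 0 => fun _ => 0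
  | n + 1 => fun x => h x + M.markovOp (maxDev h c n) x - c

lemma maxDev_le_succ (h : K → ℝ≥0∞) (c : ℝ≥0∞) (n : ℕ) :
    M.maxDev h c n ≤ M.maxDev h c (n + 1) := by
  induction n with
  | zero => exact fun _ => zero_le
  | succ n ih => exact fun x => tsub_le_tsub_right (add_le_add_right (M.markovOp_mono ih x) _) _

lemma sum_le_maxDev (h : K → ℝ≥0∞) (c : ℝ≥0∞) (n : ℕ) (x : K) :
    ∑ k ∈ Finset.range n, M.markovOp^[k] h x ≤ M.maxDev h c n x + n * c := by
  induction n generalizing x with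
  | zero => simp
  | succ n ih =>
    have h1 : (fun x => ∑ k ∈ Finset.range n, M.markovOp^[k] h x)
        ≤ M.maxDev h c n + fun _ => n * c := ih
    have h2 : M.markovOp (fun x => ∑ k ∈ Finset.range n, M.markovOp^[k] h x) x
        = ∑ k ∈ Finset.range n, M.markovOp^[k + 1] h x := by
      simp only [Function.iterate_succ_apply', markovOp, Finset.mul_sum]
      rw [Summable.tsum_finsetSum fun _ _ => ENNReal.summable]
    have h3 := M.markovOp_mono h1 x
    rw [h2, markovOp_add, markovOp_const] at h3
    rw [Finset.sum_range_succ', add_comm]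
    calc h x + ∑ k ∈ Finset.range n, M.markovOp^[k + 1] h x
        ≤ h x + (M.markovOp (M.maxDev h c n) x + n * c) := add_le_add_right h3 _
      _ = (h x + M.markovOp (M.maxDev h c n) x) + n * c := (add_assoc _ _ _).symm
      _ ≤ (M.maxDev h c (n + 1) x + c) + n * c := add_le_add_left le_tsub_add _
      _ = M.maxDev h c (n + 1) x + (n + 1 : ℕ) * c := by push_cast; ring

lemma maxDev_le {h : K → ℝ≥0∞} (hh : h ≤ 1) (c : ℝ≥0∞) (n : ℕ) (x : K) :
    M.maxDev h c n x ≤ n := by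
  induction n generalizing x with
  | zero => simp [maxDev]
  | succ n ih =>
    have h1 : M.maxDev h c n ≤ fun _ => (n : ℝ≥0∞) := ih
    have h2 := M.markovOp_mono h1 x
    rw [markovOp_const] at h2
    refine tsub_le_self.trans ?_
    rw [Nat.cast_succ, add_comm]
    exact add_le_add h2 (hh x)

lemma measurable_maxDev [Countable E] {h : K → ℝ≥0∞} (hm : Measurable h) (c : ℝ≥0∞) (n : ℕ) :
    Measurable (M.maxDev h c n) := by
  induction n with
  | zero => exact measurable_const
  | succ n ih => exact (hm.add (M.measurable_markovOp ih)).sub measurable_const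

/-- Hopf's maximal ergodic inequality for the Markov operator. -/
lemma mul_measure_cesaro_gt_le [Countable E] {μ : Measure K} [IsProbabilityMeasure μ]
    (hμ : ∀ f : K → ℝ≥0∞, Measurable f → ∫⁻ x, M.markovOp f x ∂μ = ∫⁻ x, f x ∂μ)
    {f : K → ℝ≥0∞} (hf : Measurable f) (hf1 : f ≤ 1) (c : ℝ≥0∞) :
    c * μ {x | ∃ n, c < M.cesaro x n f} ≤ ∫⁻ x, f x ∂μ := by
  set h := M.markovOp f with hdef
  have hm : Measurable h := M.measurable_markovOp hf
  have hh : h ≤ 1 := by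
    have := M.markovOp_mono hf1
    rwa [show (1 : K → ℝ≥0∞) = fun _ => 1 from rfl, markovOp_const] at this
  have hdev : ∀ n, c * μ {x | 0 < M.maxDev h c n x} ≤ ∫⁻ x, f x ∂μ := by
    intro n
    cases n with
    | zero => simp [maxDev]
    | succ n =>
      have hA : MeasurableSet {x | 0 < M.maxDev h c (n + 1) x} :=
        measurableSet_lt measurable_const (M.measurable_maxDev hm c _)
      have hpt : ∀ x, M.maxDev h c (n + 1) x
          + {x | 0 < M.maxDev h c (n + 1) x}.indicator (fun _ => c) x
          ≤ h x + M.markovOp (M.maxDev h c n) x := by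
        intro x
        by_cases hx : 0 < M.maxDev h c (n + 1) x
        · rw [Set.indicator_of_mem (by exact hx)]
          exact (tsub_add_cancel_of_le (tsub_pos_iff_lt.1 hx).le).le
        · rw [Set.indicator_of_notMem (by exact hx), not_lt.1 hx |> le_antisymm <| zero_le]
          simp
      have hint := lintegral_mono (μ := μ) hpt
      rw [lintegral_add_left (M.measurable_maxDev hm c _), lintegral_indicator_const hA,
        lintegral_add_left hm, hμ _ (M.measurable_maxDev hm c n), hdef, hμ _ hf] at hint
      have hle := lintegral_mono (μ := μ) (M.maxDev_le_succ h c n)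
      have hfin : ∫⁻ x, M.maxDev h c (n + 1) x ∂μ ≠ ⊤ := by
        refine ne_top_of_le_ne_top (ENNReal.natCast_ne_top (n + 1)) ?_
        refine (lintegral_mono (M.maxDev_le hh c (n + 1))).trans ?_
        simp
      refine (ENNReal.add_le_add_iff_left hfin).1 (hint.trans ?_)
      rw [add_comm]
      exact add_le_add_left hle _
  have hsub : {x | ∃ n, c < M.cesaro x n f} ⊆ ⋃ n, {x | 0 < M.maxDev h c n x} := by
    rintro x ⟨n, hn⟩
    refine Set.mem_iUnion.2 ⟨n + 1, ?_⟩
    by_contra h0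
    have h0' : M.maxDev h c (n + 1) x = 0 := le_antisymm (not_lt.1 h0) zero_le
    have h1 := M.sum_le_maxDev h c (n + 1) x
    rw [h0', zero_add] at h1
    refine absurd hn (not_lt.2 ?_)
    unfold cesaro
    simp only [Function.iterate_succ_apply]
    refine (mul_le_mul_right h1 _).trans ?_
    rw [← mul_assoc, ENNReal.inv_mul_cancel (by simp) (ENNReal.natCast_ne_top _), one_mul]
  have hmono : Monotone fun n => {x | 0 < M.maxDev h c n x} :=
    monotone_nat_of_le_succ fun n x hx => lt_of_lt_of_le hx (M.maxDev_le_succ h c n x)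
  refine (mul_le_mul_right (measure_mono hsub) c).trans ?_
  rw [hmono.measure_iUnion, ENNReal.mul_iSup]
  exact iSup_le hdev

end MaximalInequality

section Necessity

/-- Condition (T) holds somewhere as soon as there is an invariant probability measure. -/
lemma exists_conditionT_of_invariant [Countable N] [Countable E] {μ : Measure K}
    [IsProbabilityMeasure μ]
    (hμ : ∀ f : K → ℝ≥0∞, Measurable f → ∫⁻ x, M.markovOp f x ∂μ = ∫⁻ x, f x ∂μ) :
    ∃ x0, M.ConditionT x0 := by
  have hmeas : ∀ V, Measurable (M.tailFun V) := fun V =>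
    Measurable.tsum fun j => measurable_one.indicator (M.Kset_measurable _)
  have hint : ∀ V, ∫⁻ x, M.tailFun V x ∂μ = ∑' j : {j : N // j ∉ V}, μ (M.Kset j.val) := by
    intro V
    unfold tailFun
    rw [lintegral_tsum fun j => (measurable_one.indicator (M.Kset_measurable _)).aemeasurable]
    exact tsum_congr fun j => lintegral_indicator_one (M.Kset_measurable _)
  have hsum : ∑' j, μ (M.Kset j) ≠ ⊤ := by
    rw [← measure_iUnion M.Kset_disjoint M.Kset_measurable, M.Kset_cover]
    exact measure_ne_top _ _
  have hle1 : ∀ V, M.tailFun V ≤ 1 := by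
    intro V x
    obtain ⟨j, hj⟩ := M.exists_mem_Kset x
    have h1 : ∀ j' : N, j' ≠ j → (M.Kset j').indicator (1 : K → ℝ≥0∞) x = 0 := fun j' hne =>
      Set.indicator_of_notMem (fun h => hne (eq_of_mem_Kset h hj)) _
    calc M.tailFun V x ≤ ∑' j', (M.Kset j').indicator (1 : K → ℝ≥0∞) x :=
          ENNReal.tsum_comp_le_tsum_of_injective Subtype.val_injective _
      _ = (M.Kset j).indicator (1 : K → ℝ≥0∞) x := tsum_eq_single j h1
      _ ≤ 1 := Set.indicator_le_self _ _ _
  have hV : ∀ k : ℕ, ∃ V : Finset N, ∫⁻ x, M.tailFun V x ∂μ ≤ (2⁻¹ ^ (k + 2)) * 2⁻¹ ^ k := by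
    intro k
    have hpos : (0 : ℝ≥0∞) < (2⁻¹ ^ (k + 2)) * 2⁻¹ ^ k := by
      refine ENNReal.mul_pos ?_ ?_ <;> exact pow_ne_zero _ (by simp)
    have := (ENNReal.tendsto_tsum_compl_atTop_zero hsum).eventually (ge_mem_nhds hpos)
    obtain ⟨V, hV⟩ := this.exists
    exact ⟨V, by rw [hint]; exact hV⟩
  choose V hV using hV
  have hbad : ∀ k, μ {x | ∃ n, 2⁻¹ ^ k < M.cesaro x n (M.tailFun (V k))} ≤ 2⁻¹ ^ (k + 2) := by
    intro k
    have h1 := (M.mul_measure_cesaro_gt_le hμ (hmeas (V k)) (hle1 (V k)) (2⁻¹ ^ k)).trans (hV k)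
    rw [mul_comm] at h1
    exact (ENNReal.mul_le_mul_iff_left (pow_ne_zero _ (by simp))
      (ENNReal.pow_ne_top (by simp))).1 h1
  have hunion : μ (⋃ k, {x | ∃ n, 2⁻¹ ^ k < M.cesaro x n (M.tailFun (V k))}) < 1 := by
    refine (measure_iUnion_le _).trans_lt ((ENNReal.tsum_le_tsum hbad).trans_lt ?_)
    simp only [pow_add, ENNReal.tsum_mul_right, ENNReal.tsum_geometric, ENNReal.one_sub_inv_two,
      inv_inv]
    rw [pow_two, ← mul_assoc, ENNReal.mul_inv_cancel (by simp) (by simp), one_mul]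
    exact ENNReal.inv_lt_one.2 (by norm_num)
  obtain ⟨x0, hx0⟩ : ∃ x0, x0 ∉ ⋃ k, {x | ∃ n, 2⁻¹ ^ k < M.cesaro x n (M.tailFun (V k))} := by
    by_contra! hall
    rw [Set.eq_univ_of_forall hall, measure_univ] at hunion
    exact lt_irrefl _ hunion
  simp only [Set.mem_iUnion, Set.mem_ofPred_eq, not_exists, not_lt] at hx0
  refine ⟨x0, (M.conditionT_iff x0).2 fun ε hε => ?_⟩
  obtain ⟨k, hk⟩ := ENNReal.exists_inv_two_pow_lt (ENNReal.ofReal_pos.2 hε).ne'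
  exact ⟨V k, fun n => (hx0 k n).trans_lt hk⟩

/-- The image of an equilibrium state under the coding map is invariant. -/
lemma lintegral_markovOp_map_limCode [Countable E] [CompleteSpace K] [BorelSpace K] {j0 : N}
    {xp : N → K} (hxp : ∀ j, xp j ∈ M.Kset j) (huc : M.IsUniformlyContinuous)
    {Λ : Measure (CodeSpace E)} (hΛ : M.IsEquilibrium j0 xp Λ) {f : K → ℝ≥0∞} (hf : Measurable f) :
    ∫⁻ x, M.markovOp f x ∂(Λ.map (M.limCode j0 xp)) = ∫⁻ x, f x ∂(Λ.map (M.limCode j0 xp)) := by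
  obtain ⟨_, hS, hD, hcond⟩ := hΛ
  have hDae := ae_mem_codeDomain hD
  have hFp := M.measurable_limCode j0 xp
  have hF : Measurable (M.limCode j0 xp) := hFp.mono pastAlgebra_le le_rfl
  have hdens : ∀ (e : E) {g : CodeSpace E → ℝ≥0∞}, Measurable[pastAlgebra E] g →
      ∫⁻ σ in {σ | σ 1 = some e}, g σ ∂Λ
        = ∫⁻ σ, ENNReal.ofReal (M.p e (M.limCode j0 xp σ)) * g σ ∂Λ := by
    intro e g hg
    refine lintegral_coord_of_density ((M.measurable_ofReal_p e).comp hF) ?_ hg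
    refine (condExp_coord_ae_eq_iff e ((M.p_measurable e).comp hFp) (fun σ => M.p_nonneg _ _)
      fun σ => M.p_le_one _ _).1 ?_
    refine (hcond e).trans ?_
    filter_upwards [hDae] with σ hσ
    rw [code_eq_limCode hσ]; rfl
  have hstep : ∀ e : E, ∀ᵐ σ ∂Λ, σ 1 = some e →
      f (M.limCode j0 xp (shiftMap E σ)) = f (M.w e (M.limCode j0 xp σ)) := by
    intro e
    have hB : MeasurableSet {x | M.p e x = 0} := M.p_measurable e (measurableSet_singleton 0)
    have h0 := hdens e (g := fun σ => {x | M.p e x = 0}.indicator 1 (M.limCode j0 xp σ))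
      ((measurable_one.indicator hB).comp hFp)
    have hBm : Measurable fun σ => {x | M.p e x = 0}.indicator (1 : K → ℝ≥0∞) (M.limCode j0 xp σ) :=
      (measurable_one.indicator hB).comp hF
    have h1 : ∫⁻ σ, ENNReal.ofReal (M.p e (M.limCode j0 xp σ))
        * {x | M.p e x = 0}.indicator 1 (M.limCode j0 xp σ) ∂Λ = 0 := by
      rw [← lintegral_zero (μ := Λ)]
      refine lintegral_congr fun σ => ?_
      by_cases hσ : M.p e (M.limCode j0 xp σ) = 0
      · simp [hσ]
      · simp [Set.indicator, hσ]
    rw [h1, lintegral_eq_zero_iff hBm, EventuallyEq,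
      ae_restrict_iff' (measurableSet_coord 1 (some e))] at h0
    filter_upwards [h0, hDae] with σ h2 hσ h3
    rw [limCode_shiftMap hxp huc hσ h3 (mem_Kset_of_p_ne_zero fun h4 => ?_)]
    simpa [Set.indicator, h4] using h2 h3
  have hnone : ∀ k : ℤ, Λ {σ | σ k = none} = 0 := by
    intro k
    have : ∀ᵐ σ ∂Λ, ¬ σ k = none := by
      filter_upwards [hDae] with σ hσ
      obtain ⟨e, _, he, _⟩ := hσ.1 k
      simp [he]
    simpa [ae_iff] using this
  rw [lintegral_map (M.measurable_markovOp hf) hF, lintegral_map hf hF]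
  symm
  calc ∫⁻ σ, f (M.limCode j0 xp σ) ∂Λ
      = ∫⁻ σ, f (M.limCode j0 xp (shiftMap E σ)) ∂Λ := by
        conv_lhs => rw [← hS]
        exact lintegral_map (hf.comp hF) measurable_shiftMap
    _ = ∑' e, ∫⁻ σ in {σ | σ 1 = some e}, f (M.limCode j0 xp (shiftMap E σ)) ∂Λ := by
        rw [lintegral_eq_wordSum hnone 1 1]
        simp [wordSum_succ, wordSum_zero, cylSetL_cons, cylSetL_nil]
    _ = ∑' e, ∫⁻ σ in {σ | σ 1 = some e}, f (M.w e (M.limCode j0 xp σ)) ∂Λ :=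
        tsum_congr fun e => setLIntegral_congr_fun_ae (measurableSet_coord 1 (some e)) (hstep e)
    _ = ∑' e, ∫⁻ σ, ENNReal.ofReal (M.p e (M.limCode j0 xp σ))
          * f (M.w e (M.limCode j0 xp σ)) ∂Λ :=
        tsum_congr fun e => hdens e ((hf.comp (M.w_measurable e)).comp hFp)
    _ = ∫⁻ σ, M.markovOp f (M.limCode j0 xp σ) ∂Λ := by
        have hm : ∀ e, AEMeasurable (fun σ => ENNReal.ofReal (M.p e (M.limCode j0 xp σ))
            * f (M.w e (M.limCode j0 xp σ))) Λ := fun e =>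
          (((M.measurable_ofReal_p e).mul (hf.comp (M.w_measurable e))).comp hF).aemeasurable
        exact (lintegral_tsum hm).symm

end Necessity

end MarkovSystem

namespace MarkovSystem

variable {K : Type*} [MetricSpace K] [MeasurableSpace K] {N E : Type*} (M : MarkovSystem K N E)

section BanachLimit

/-- The limit of the Cesàro averages at `x₀` along a fixed nonprincipal ultrafilter. -/
noncomputable def cesaroLim (x0 : K) (f : K → ℝ≥0∞) : ℝ≥0∞ :=
  ((hyperfilter ℕ).map fun n => M.cesaro x0 n f).lim

lemma tendsto_cesaroLim (x0 : K) (f : K → ℝ≥0∞) :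
    Tendsto (fun n => M.cesaro x0 n f) (hyperfilter ℕ) (𝓝 (M.cesaroLim x0 f)) :=
  ((hyperfilter ℕ).map fun n => M.cesaro x0 n f).le_nhds_lim

lemma cesaro_mono (x0 : K) (n : ℕ) : Monotone (M.cesaro x0 n) := fun _ _ h =>
  mul_le_mul_right (Finset.sum_le_sum fun k _ => M.iterate_markovOp_mono (k + 1) h x0) _

lemma cesaro_add (x0 : K) (n : ℕ) (f g : K → ℝ≥0∞) :
    M.cesaro x0 n (f + g) = M.cesaro x0 n f + M.cesaro x0 n g := by
  simp only [cesaro, iterate_markovOp_add, Pi.add_apply, Finset.sum_add_distrib, mul_add]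

lemma cesaro_const_mul (x0 : K) (n : ℕ) (c : ℝ≥0∞) (f : K → ℝ≥0∞) :
    M.cesaro x0 n (fun x => c * f x) = c * M.cesaro x0 n f := by
  simp only [cesaro, iterate_markovOp_const_mul, ← Finset.mul_sum]
  exact mul_left_comm _ _ _

lemma cesaro_le (x0 : K) (n : ℕ) {f : K → ℝ≥0∞} {C : ℝ≥0∞}
    (h : ∀ k, M.markovOp^[k] f x0 ≤ C) : M.cesaro x0 n f ≤ C := by
  have h1 : ∑ k ∈ Finset.range (n + 1), M.markovOp^[k + 1] f x0 ≤ (n + 1 : ℕ) * C := by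
    refine (Finset.sum_le_sum fun k _ => h (k + 1)).trans ?_
    simp
  refine (mul_le_mul_right h1 _).trans ?_
  rw [← mul_assoc, ENNReal.inv_mul_cancel (by simp) (ENNReal.natCast_ne_top _), one_mul]

lemma cesaroLim_mono (x0 : K) : Monotone (M.cesaroLim x0) := fun f g h =>
  le_of_tendsto_of_tendsto' (M.tendsto_cesaroLim x0 f) (M.tendsto_cesaroLim x0 g)
    fun n => M.cesaro_mono x0 n h

lemma cesaroLim_add (x0 : K) (f g : K → ℝ≥0∞) :
    M.cesaroLim x0 (f + g) = M.cesaroLim x0 f + M.cesaroLim x0 g := by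
  refine tendsto_nhds_unique (M.tendsto_cesaroLim x0 _) ?_
  simp only [cesaro_add]
  exact (M.tendsto_cesaroLim x0 f).add (M.tendsto_cesaroLim x0 g)

lemma cesaroLim_const_mul (x0 : K) {c : ℝ≥0∞} (hc : c ≠ ⊤) (f : K → ℝ≥0∞) :
    M.cesaroLim x0 (fun x => c * f x) = c * M.cesaroLim x0 f := by
  refine tendsto_nhds_unique (M.tendsto_cesaroLim x0 _) ?_
  simp only [cesaro_const_mul]
  exact ENNReal.Tendsto.const_mul (M.tendsto_cesaroLim x0 f) (Or.inr hc)

lemma cesaroLim_le (x0 : K) {f : K → ℝ≥0∞} {C : ℝ≥0∞}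
    (h : ∀ k, M.markovOp^[k] f x0 ≤ C) : M.cesaroLim x0 f ≤ C :=
  le_of_tendsto' (M.tendsto_cesaroLim x0 f) fun n => M.cesaro_le x0 n h

lemma cesaroLim_const (x0 : K) (c : ℝ≥0∞) : M.cesaroLim x0 (fun _ => c) = c := by
  refine tendsto_nhds_unique (M.tendsto_cesaroLim x0 _) ?_
  have : ∀ n, M.cesaro x0 n (fun _ => c) = c := by
    intro n
    simp only [cesaro, iterate_markovOp_const, Finset.sum_const, Finset.card_range, nsmul_eq_mul]
    rw [← mul_assoc, ENNReal.inv_mul_cancel (by simp) (ENNReal.natCast_ne_top _), one_mul]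
  simp only [this]
  exact tendsto_const_nhds

lemma iterate_markovOp_le_one (k : ℕ) {f : K → ℝ≥0∞} (hf : f ≤ 1) : M.markovOp^[k] f ≤ 1 := by
  have := M.iterate_markovOp_mono k hf
  rwa [show (1 : K → ℝ≥0∞) = fun _ => 1 from rfl, iterate_markovOp_const] at this

lemma cesaroLim_markovOp (x0 : K) {f : K → ℝ≥0∞} (hf : f ≤ 1) :
    M.cesaroLim x0 (M.markovOp f) = M.cesaroLim x0 f := by
  have hinv : Tendsto (fun n : ℕ => ((n + 1 : ℕ) : ℝ≥0∞)⁻¹) (hyperfilter ℕ) (𝓝 0) :=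
    (ENNReal.tendsto_inv_nat_nhds_zero.comp (tendsto_add_atTop_nat 1)).mono_left
      Nat.hyperfilter_le_atTop
  have hsum : ∀ n, ∑ k ∈ Finset.range (n + 1), M.markovOp^[k + 1] (M.markovOp f) x0
      + M.markovOp f x0
        = ∑ k ∈ Finset.range (n + 1), M.markovOp^[k + 1] f x0 + M.markovOp^[n + 2] f x0 := by
    intro n
    simp only [← Function.iterate_succ_apply]
    rw [← Finset.sum_range_succ (fun k => M.markovOp^[k + 1] f x0) (n + 1),
      Finset.sum_range_succ' (fun k => M.markovOp^[k + 1] f x0) (n + 1)]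
    rfl
  refine le_antisymm ?_ ?_
  · have hlim := (M.tendsto_cesaroLim x0 f).add hinv
    rw [add_zero] at hlim
    refine le_of_tendsto_of_tendsto' (M.tendsto_cesaroLim x0 _) hlim fun n => ?_
    unfold cesaro
    conv_rhs => rw [← mul_one (((n + 1 : ℕ) : ℝ≥0∞)⁻¹), mul_assoc, one_mul]
    rw [← mul_add]
    refine mul_le_mul_right ?_ _
    exact (le_self_add.trans (hsum n).le).trans
      (add_le_add_right (M.iterate_markovOp_le_one (n + 2) hf x0) _)
  · have hlim := (M.tendsto_cesaroLim x0 (M.markovOp f)).add hinv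
    rw [add_zero] at hlim
    refine le_of_tendsto_of_tendsto' (M.tendsto_cesaroLim x0 _) hlim fun n => ?_
    unfold cesaro
    conv_rhs => rw [← mul_one (((n + 1 : ℕ) : ℝ≥0∞)⁻¹), mul_assoc, one_mul]
    rw [← mul_add]
    refine mul_le_mul_right ?_ _
    exact (le_self_add.trans (hsum n).ge).trans
      (add_le_add_right (M.iterate_markovOp_le_one 1 hf x0) _)

lemma cesaroLim_iterate_markovOp (x0 : K) (k : ℕ) {f : K → ℝ≥0∞} (hf : f ≤ 1) :
    M.cesaroLim x0 (M.markovOp^[k] f) = M.cesaroLim x0 f := by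
  induction k with
  | zero => rfl
  | succ k ih =>
    rw [Function.iterate_succ_apply', cesaroLim_markovOp _ _ (M.iterate_markovOp_le_one k hf), ih]

lemma cesaroLim_finsetSum {ι : Type*} (x0 : K) (s : Finset ι) (f : ι → K → ℝ≥0∞) :
    M.cesaroLim x0 (fun x => ∑ i ∈ s, f i x) = ∑ i ∈ s, M.cesaroLim x0 (f i) := by
  induction s using Finset.induction_on with
  | empty => simpa using M.cesaroLim_const x0 0
  | insert i s hi ih =>
    simp only [Finset.sum_insert hi]
    rw [← ih, ← cesaroLim_add]
    rfl

lemma tsum_cesaroLim_le {ι : Type*} (x0 : K) (f : ι → K → ℝ≥0∞) :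
    ∑' i, M.cesaroLim x0 (f i) ≤ M.cesaroLim x0 (fun x => ∑' i, f i x) := by
  rw [ENNReal.tsum_eq_iSup_sum]
  refine iSup_le fun s => ?_
  rw [← cesaroLim_finsetSum]
  exact M.cesaroLim_mono x0 fun x => ENNReal.sum_le_tsum s

lemma wordSum_cesaroLim_le (x0 : K) (n : ℕ) (h : List E → K → ℝ≥0∞) :
    wordSum n (fun w => M.cesaroLim x0 (h w))
      ≤ M.cesaroLim x0 (fun x => wordSum n fun w => h w x) :=
  M.tsum_cesaroLim_le x0 _

end BanachLimit

section Tightness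

/-- The probability of leaving along an edge outside `F`. -/
noncomputable def edgeTail (F : Finset E) : K → ℝ≥0∞ :=
  fun x => ∑' e, if e ∈ F then 0 else ENNReal.ofReal (M.p e x)

lemma edgeTail_le_one (F : Finset E) : M.edgeTail F ≤ 1 := fun x => by
  refine le_trans (ENNReal.tsum_le_tsum fun e => ?_) (M.tsum_p x).le
  split_ifs <;> simp

lemma one_le_tailFun {V : Finset N} {j : N} (hj : j ∉ V) {x : K} (hx : x ∈ M.Kset j) :
    1 ≤ M.tailFun V x := by
  refine le_trans ?_ (ENNReal.le_tsum (⟨j, hj⟩ : {j : N // j ∉ V}))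
  simp [hx]

lemma exists_cesaroLim_edgeTail_le [Countable E] {x0 : K} (hT : M.ConditionT x0)
    (hdom : M.HasDominatingChain) {ε : ℝ≥0∞} (hε : ε ≠ 0) :
    ∃ F : Finset E, M.cesaroLim x0 (M.edgeTail F) ≤ ε := by
  wlog hε' : ε ≠ ⊤ generalizing ε
  · exact ⟨∅, (not_not.1 hε').symm ▸ le_top⟩
  have hε2 : 0 < ε / 2 := ENNReal.half_pos hε
  have hε2' : ε / 2 ≠ ⊤ := ENNReal.div_ne_top hε' (by simp)
  obtain ⟨V, hV⟩ := (M.conditionT_iff x0).1 hT _ (ENNReal.toReal_pos hε2.ne' hε2')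
  rw [ENNReal.ofReal_toReal hε2'] at hV
  have hF : ∀ j, ∃ F : Finset {e : E // M.i e = j},
      ∑' e : {e : {e : E // M.i e = j} // e ∉ F},
        (⨆ x ∈ M.Kset j, ENNReal.ofReal (M.p e.val.val x)) ≤ ε / 2 := fun j =>
    ((ENNReal.tendsto_tsum_compl_atTop_zero (hdom j)).eventually (ge_mem_nhds hε2)).exists
  choose F hF using hF
  let G : Finset E := V.biUnion fun j => (F j).map (Function.Embedding.subtype _)
  refine ⟨G, ?_⟩
  have hle : M.edgeTail G ≤ M.tailFun V + fun _ => ε / 2 := by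
    intro x
    obtain ⟨j, hx⟩ := M.exists_mem_Kset x
    by_cases hj : j ∈ V
    · refine le_trans ?_ le_add_self
      refine le_trans ?_ (hF j)
      have h1 : M.edgeTail G x = ∑' e : {e : E // M.i e = j},
          if e.val ∈ G then 0 else ENNReal.ofReal (M.p e.val x) := by
        symm
        refine tsum_subtype_eq_of_support_subset (s := {e : E | M.i e = j})
          (f := fun e => if e ∈ G then 0 else ENNReal.ofReal (M.p e x)) fun e he => ?_
        have hp : M.p e x ≠ 0 := fun h0 => he (by simp [h0])
        exact eq_of_mem_Kset (mem_Kset_of_p_ne_zero hp) hx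
      rw [h1]
      have h2 := tsum_subtype {e : {e : E // M.i e = j} | e ∉ F j}
        (fun e => ⨆ x ∈ M.Kset j, ENNReal.ofReal (M.p e.val x))
      refine le_trans ?_ h2.ge
      refine ENNReal.tsum_le_tsum fun e => ?_
      by_cases he : e ∈ F j
      · have : e.val ∈ G :=
          Finset.mem_biUnion.2 ⟨j, hj, Finset.mem_map.2 ⟨e, he, rfl⟩⟩
        simp [this]
      · rw [Set.indicator_of_mem (by exact he)]
        refine le_trans ?_ (le_iSup₂ (f := fun x _ => ENNReal.ofReal (M.p e.val x)) x hx)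
        split_ifs <;> simp
    · exact (M.edgeTail_le_one G x).trans ((M.one_le_tailFun hj hx).trans le_self_add)
  refine (M.cesaroLim_mono x0 hle).trans ?_
  rw [cesaroLim_add, cesaroLim_const]
  refine (add_le_add_left (le_of_tendsto' (M.tendsto_cesaroLim x0 _) fun n => (hV n).le) _).trans ?_
  rw [ENNReal.add_halves]

lemma cesaroLim_tsum {x0 : K}
    (hT : ∀ ε : ℝ≥0∞, ε ≠ 0 → ∃ F : Finset E, M.cesaroLim x0 (M.edgeTail F) ≤ ε)
    {h : E → K → ℝ≥0∞}
    (hle : ∀ F : Finset E, M.cesaroLim x0 (fun x => ∑' e, if e ∈ F then 0 else h e x)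
      ≤ M.cesaroLim x0 (M.edgeTail F)) :
    ∑' e, M.cesaroLim x0 (h e) = M.cesaroLim x0 (fun x => ∑' e, h e x) := by
  refine le_antisymm (M.tsum_cesaroLim_le x0 h) ?_
  refine ENNReal.le_of_forall_pos_le_add fun ε hε _ => ?_
  obtain ⟨F, hF⟩ := hT ε (by exact_mod_cast hε.ne')
  have hsplit : (fun x => ∑' e, h e x)
      = (fun x => ∑ e ∈ F, h e x) + fun x => ∑' e, if e ∈ F then 0 else h e x := by
    funext x
    have h1 : ∑ e ∈ F, h e x = ∑' e, if e ∈ F then h e x else 0 := by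
      rw [tsum_eq_sum (s := F) fun e he => by simp [he]]
      exact Finset.sum_congr rfl fun e he => by simp [he]
    rw [Pi.add_apply, h1, ← ENNReal.tsum_add]
    exact tsum_congr fun e => by split_ifs <;> simp
  rw [hsplit, cesaroLim_add, cesaroLim_finsetSum]
  exact add_le_add (ENNReal.sum_le_tsum F) ((hle F).trans hF)

end Tightness

section WordWeight

/-- The probability `p_{e_0}(x) p_{e_1}(w_{e_0} x) ⋯` of following the word `e_0 e_1 ⋯` from `x`. -/
noncomputable def wordWeight : List E → K → ℝ≥0∞
  | [], _ => 1
  | e :: w, x => ENNReal.ofReal (M.p e x) * wordWeight w (M.w e x)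

/-- The action `y ↦ w_{e_n} ∘ ⋯ ∘ w_{e_0} (y)` of the word `e_0 ⋯ e_n`. -/
def actWord : List E → K → K
  | [], y => y
  | e :: w, y => actWord w (M.w e y)

lemma wordWeight_append (w v : List E) (x : K) :
    M.wordWeight (w ++ v) x = M.wordWeight w x * M.wordWeight v (M.actWord w x) := by
  induction w generalizing x with
  | nil => simp [wordWeight, actWord]
  | cons e w ih => simp only [List.cons_append, wordWeight, actWord, ih, mul_assoc]

lemma wordWeight_le_one (w : List E) : M.wordWeight w ≤ 1 := by
  induction w with
  | nil => exact fun _ => le_rfl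
  | cons e w ih =>
    exact fun x => mul_le_one' (ENNReal.ofReal_le_one.2 (M.p_le_one e x)) (ih _)

lemma wordWeight_singleton (e : E) (x : K) : M.wordWeight [e] x = ENNReal.ofReal (M.p e x) := by
  simp [wordWeight]

lemma markovOp_wordWeight (w : List E) :
    M.markovOp (M.wordWeight w) = fun x => ∑' e, M.wordWeight (e :: w) x := rfl

lemma iterate_markovOp_eq_wordSum (n : ℕ) (f : K → ℝ≥0∞) (x : K) :
    M.markovOp^[n] f x = wordSum n fun w => M.wordWeight w x * f (M.actWord w x) := by
  induction n generalizing x with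
  | zero => simp [wordSum_zero, wordWeight, actWord]
  | succ n ih =>
    rw [Function.iterate_succ_apply', wordSum_succ]
    refine tsum_congr fun e => ?_
    rw [ih, ← wordSum_const_mul]
    exact wordSum_congr fun w _ => by simp only [wordWeight, actWord, mul_assoc]

lemma wordWeight_mul_le_iterate (w : List E) (f : K → ℝ≥0∞) (x : K) :
    M.wordWeight w x * f (M.actWord w x) ≤ M.markovOp^[w.length] f x := by
  induction w generalizing x with
  | nil => simp [wordWeight, actWord]
  | cons e w ih =>
    rw [List.length_cons, Function.iterate_succ_apply']
    refine le_trans ?_ (ENNReal.le_tsum e)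
    rw [wordWeight, actWord, mul_assoc]
    exact mul_le_mul_right (ih _) _

lemma tsum_cesaroLim_wordWeight_cons {x0 : K}
    (hT : ∀ ε : ℝ≥0∞, ε ≠ 0 → ∃ F : Finset E, M.cesaroLim x0 (M.edgeTail F) ≤ ε) (w : List E) :
    ∑' e, M.cesaroLim x0 (M.wordWeight (e :: w)) = M.cesaroLim x0 (M.wordWeight w) := by
  rw [M.cesaroLim_tsum hT, ← markovOp_wordWeight, cesaroLim_markovOp _ _ (M.wordWeight_le_one w)]
  refine fun F => M.cesaroLim_mono x0 fun x => ENNReal.tsum_le_tsum fun e => ?_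
  split_ifs
  · exact le_rfl
  · exact mul_le_of_le_one_right' (M.wordWeight_le_one w _)

lemma tsum_cesaroLim_wordWeight_append {x0 : K}
    (hT : ∀ ε : ℝ≥0∞, ε ≠ 0 → ∃ F : Finset E, M.cesaroLim x0 (M.edgeTail F) ≤ ε) (w : List E) :
    ∑' e, M.cesaroLim x0 (M.wordWeight (w ++ [e])) = M.cesaroLim x0 (M.wordWeight w) := by
  rw [M.cesaroLim_tsum hT]
  · congr 1
    funext x
    simp only [wordWeight_append, wordWeight_singleton, ENNReal.tsum_mul_left, tsum_p, mul_one]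
  · intro F
    rw [← M.cesaroLim_iterate_markovOp x0 w.length (M.edgeTail_le_one F)]
    refine M.cesaroLim_mono x0 fun x => le_trans ?_ (M.wordWeight_mul_le_iterate w _ x)
    rw [edgeTail, ← ENNReal.tsum_mul_left]
    refine ENNReal.tsum_le_tsum fun e => ?_
    split_ifs
    · exact zero_le
    · rw [wordWeight_append, wordWeight_singleton]

/-- The stationary process associated with the Cesàro limits. -/
theorem exists_stationary_measure [Countable E] {x0 : K}
    (hT : ∀ ε : ℝ≥0∞, ε ≠ 0 → ∃ F : Finset E, M.cesaroLim x0 (M.edgeTail F) ≤ ε) :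
    ∃ Λ : Measure (CodeSpace E), IsProbabilityMeasure Λ ∧ (∀ k, Λ {σ | σ k = none} = 0) ∧
      Measure.map (shiftMap E) Λ = Λ ∧
      ∀ (m : ℤ) (w : List E), Λ (cylSetL m (w.map some)) = M.cesaroLim x0 (M.wordWeight w) := by
  have h0 : M.cesaroLim x0 (M.wordWeight []) = 1 := M.cesaroLim_const x0 1
  obtain ⟨Λ, hΛ, hcyl⟩ := exists_measure_of_consistent
    (lam := fun w => M.cesaroLim x0 (M.wordWeight w)) h0
    (M.tsum_cesaroLim_wordWeight_append hT) (M.tsum_cesaroLim_wordWeight_cons hT)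
  have h1 : ∑' e, M.cesaroLim x0 (M.wordWeight [e]) = 1 :=
    (M.tsum_cesaroLim_wordWeight_cons hT []).trans h0
  have hnone := measure_coord_none_eq_zero h1 hcyl
  exact ⟨Λ, hΛ, hnone, map_shiftMap_eq hnone hcyl, hcyl⟩

end WordWeight

end MarkovSystem

namespace MarkovSystem

variable {K : Type*} [MetricSpace K] [MeasurableSpace K] {N E : Type*} (M : MarkovSystem K N E)
  (j0 : N) (xp : N → K)

section Contraction

variable {M j0 xp} {a : ℝ}

lemma ofReal_p_eq_zero {e : E} {x : K} (h : x ∉ M.Kset (M.i e)) : ENNReal.ofReal (M.p e x) = 0 := by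
  rw [M.p_zero_outside e x h, ENNReal.ofReal_zero]

lemma tsum_p_mul_edist_le (hcon : M.IsContractive a) (ha0 : 0 < a) {j : N} {x y : K}
    (hx : x ∈ M.Kset j) (hy : y ∈ M.Kset j) :
    ∑' e, ENNReal.ofReal (M.p e x) * edist (M.w e x) (M.w e y)
      ≤ ENNReal.ofReal a * edist x y := by
  rw [M.tsum_p_mul_eq hx]
  have := hcon j x hx y hy
  rw [ENNReal.ofReal_mul ha0.le] at this
  simpa only [ENNReal.ofReal_mul (M.p_nonneg _ _), ← edist_dist] using this

lemma Lfun_eq {j : N} {x : K} (hx : x ∈ M.Kset j) : M.Lfun xp x = edist x (xp j) := by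
  unfold Lfun
  rw [tsum_eq_single j fun j' hne =>
    Set.indicator_of_notMem (fun h => hne (eq_of_mem_Kset h hx)) _, Set.indicator_of_mem hx,
    edist_dist]

lemma wordSum_edist_le (hcon : M.IsContractive a) (ha0 : 0 < a) (n : ℕ) {j : N} {x y : K}
    (hx : x ∈ M.Kset j) (hy : y ∈ M.Kset j) :
    wordSum n (fun w => M.wordWeight w x * edist (M.actWord w x) (M.actWord w y))
      ≤ ENNReal.ofReal a ^ n * edist x y := by
  induction n generalizing j x y with
  | zero => simp [wordSum_zero, wordWeight, actWord]
  | succ n ih =>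
    rw [wordSum_succ]
    calc ∑' e, wordSum n (fun w => M.wordWeight (e :: w) x
            * edist (M.actWord (e :: w) x) (M.actWord (e :: w) y))
        = ∑' e, ENNReal.ofReal (M.p e x) * wordSum n (fun w => M.wordWeight w (M.w e x)
            * edist (M.actWord w (M.w e x)) (M.actWord w (M.w e y))) := by
          refine tsum_congr fun e => ?_
          rw [← wordSum_const_mul]
          exact wordSum_congr fun w _ => by simp only [wordWeight, actWord, mul_assoc]
      _ ≤ ∑' e, ENNReal.ofReal a ^ n * (ENNReal.ofReal (M.p e x)
            * edist (M.w e x) (M.w e y)) := by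
          refine ENNReal.tsum_le_tsum fun e => ?_
          by_cases hxe : x ∈ M.Kset (M.i e)
          · obtain rfl := eq_of_mem_Kset hxe hx
            rw [mul_left_comm]
            exact mul_le_mul_right (ih (M.w_mapsTo e hx) (M.w_mapsTo e hy)) _
          · simp [ofReal_p_eq_zero hxe]
      _ ≤ ENNReal.ofReal a ^ n * (ENNReal.ofReal a * edist x y) := by
          rw [ENNReal.tsum_mul_left]
          exact mul_le_mul_right (tsum_p_mul_edist_le hcon ha0 hx hy) _
      _ = ENNReal.ofReal a ^ (n + 1) * edist x y := by rw [pow_succ, mul_assoc]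

lemma markovOp_Lfun_le (hxp : ∀ j, xp j ∈ M.Kset j) (hcon : M.IsContractive a) (ha0 : 0 < a)
    (x : K) : M.markovOp (M.Lfun xp) x ≤ ENNReal.ofReal a * M.Lfun xp x + M.bConst xp := by
  obtain ⟨j, hx⟩ := M.exists_mem_Kset x
  have hb : ∑' e, ENNReal.ofReal (M.p e x) * edist (M.w e (xp (M.i e))) (xp (M.t e))
      ≤ M.bConst xp := by
    rw [M.tsum_p_mul_eq hx]
    refine le_trans (le_of_eq ?_) (le_iSup_of_le j (le_iSup₂_of_le x hx le_rfl))
    simp only [ENNReal.ofReal_mul (M.p_nonneg _ _), ← edist_dist]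
  rw [Lfun_eq hx]
  refine le_trans ?_ (add_le_add (tsum_p_mul_edist_le hcon ha0 hx (hxp j)) hb)
  rw [← ENNReal.tsum_add]
  refine ENNReal.tsum_le_tsum fun e => ?_
  by_cases hxe : x ∈ M.Kset (M.i e)
  · obtain rfl := eq_of_mem_Kset hxe hx
    rw [Lfun_eq (M.w_mapsTo e hx), ← mul_add]
    exact mul_le_mul_right (edist_triangle _ _ _) _
  · simp [ofReal_p_eq_zero hxe]

lemma exists_iterate_Lfun_le (hxp : ∀ j, xp j ∈ M.Kset j) (hcon : M.IsContractive a) (ha0 : 0 < a)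
    (ha1 : a < 1) (hb : M.bConst xp ≠ ⊤) (x0 : K) :
    ∃ C : ℝ≥0∞, C ≠ ⊤ ∧ ∀ k, M.markovOp^[k] (M.Lfun xp) x0 ≤ C := by
  have key : ∀ k, M.markovOp^[k] (M.Lfun xp) ≤ (fun x => ENNReal.ofReal a ^ k * M.Lfun xp x)
      + fun _ => M.bConst xp * ∑ i ∈ Finset.range k, ENNReal.ofReal a ^ i := by
    intro k
    induction k with
    | zero => exact fun x => by simp
    | succ k ih =>
      rw [Function.iterate_succ_apply']
      refine (M.markovOp_mono ih).trans ?_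
      rw [markovOp_add, markovOp_const, markovOp_const_mul]
      intro x
      simp only [Pi.add_apply]
      refine (add_le_add_left (mul_le_mul_right (markovOp_Lfun_le hxp hcon ha0 x) _) _).trans_eq ?_
      rw [Finset.sum_range_succ, pow_succ]
      ring
  have ha : ENNReal.ofReal a < 1 := ENNReal.ofReal_lt_one.2 ha1
  refine ⟨M.Lfun xp x0 + M.bConst xp * (1 - ENNReal.ofReal a)⁻¹, ?_, fun k => ?_⟩
  · obtain ⟨j, hx⟩ := M.exists_mem_Kset x0
    rw [Lfun_eq hx]
    exact ENNReal.add_ne_top.2 ⟨edist_ne_top _ _, ENNReal.mul_ne_top hb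
      (ENNReal.inv_ne_top.2 (tsub_pos_iff_lt.2 ha).ne')⟩
  · refine (key k x0).trans (add_le_add (mul_le_of_le_one_left' (pow_le_one' ha.le k)) ?_)
    rw [← ENNReal.tsum_geometric]
    exact mul_le_mul_right (ENNReal.sum_le_tsum _) _

end Contraction

section OrbitWords

/-- The endpoint of the word `w` started at the base point of its initial vertex set. -/
noncomputable def orbWord (w : List E) : K :=
  M.actWord w (xp (M.iext j0 w.head?))

lemma iterW_eq_actWord {σ : CodeSpace E} {n : ℕ} {w : List E} (hw : w.length = n + 1)
    (hσ : σ ∈ cylSetL (-(n : ℤ)) (w.map some)) (y : K) : M.iterW σ n y = M.actWord w y := by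
  induction n generalizing w y with
  | zero =>
    obtain ⟨e, rfl⟩ := List.length_eq_one_iff.1 hw
    have h0 : σ 0 = some e := by simpa [cylSetL_cons, cylSetL_nil] using hσ
    simp [iterW, wext, h0, actWord]
  | succ n ih =>
    obtain ⟨e, w, rfl⟩ := List.exists_cons_of_length_eq_add_one hw
    rw [List.map_cons, cylSetL_cons] at hσ
    have h1 : -((n + 1 : ℕ) : ℤ) + 1 = -(n : ℤ) := by push_cast; ring
    rw [h1] at hσ
    have h2 : σ (-((n : ℤ) + 1)) = some e := by simpa using hσ.1
    rw [iterW, h2, ih (by simpa using hw) hσ.2]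
    rfl

lemma orbit_eq_orbWord {σ : CodeSpace E} {n : ℕ} {w : List E} (hw : w.length = n + 1)
    (hσ : σ ∈ cylSetL (-(n : ℤ)) (w.map some)) : M.orbit j0 xp σ n = M.orbWord j0 xp w := by
  rw [orbit, M.iterW_eq_actWord hw hσ, orbWord]
  obtain ⟨e, w, rfl⟩ := List.exists_cons_of_length_eq_add_one hw
  rw [List.map_cons, cylSetL_cons] at hσ
  rw [hσ.1, List.head?_cons]

variable {M j0 xp} {a : ℝ}

lemma wordWeight_mul_edist_orbWord {j : N} {x : K} (hx : x ∈ M.Kset j) {w : List E} (hw : w ≠ []) :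
    M.wordWeight w x * edist (M.actWord w x) (M.orbWord j0 xp w)
      = M.wordWeight w x * edist (M.actWord w x) (M.actWord w (xp j)) := by
  obtain ⟨e, w, rfl⟩ := List.exists_cons_of_ne_nil hw
  by_cases hxe : x ∈ M.Kset (M.i e)
  · obtain rfl := eq_of_mem_Kset hxe hx
    rfl
  · simp [wordWeight, ofReal_p_eq_zero hxe]

lemma wordSum_edist_orbWord_le (hxp : ∀ j, xp j ∈ M.Kset j) (hcon : M.IsContractive a)
    (ha0 : 0 < a) (n : ℕ) (x : K) :
    wordSum (n + 1) (fun w => M.wordWeight w x * edist (M.actWord w x) (M.orbWord j0 xp w))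
      ≤ ENNReal.ofReal a ^ (n + 1) * M.Lfun xp x := by
  obtain ⟨j, hx⟩ := M.exists_mem_Kset x
  rw [Lfun_eq hx]
  refine le_trans (le_of_eq (wordSum_congr fun w hw => ?_))
    (wordSum_edist_le hcon ha0 (n + 1) hx (hxp j))
  exact wordWeight_mul_edist_orbWord hx (List.ne_nil_of_length_eq_add_one hw)

lemma wordSum_edist_orbWord_tail_le (hxp : ∀ j, xp j ∈ M.Kset j) (hcon : M.IsContractive a)
    (ha0 : 0 < a) (n : ℕ) (x : K) :
    wordSum (n + 2) (fun w => M.wordWeight w x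
        * edist (M.orbWord j0 xp w.tail) (M.orbWord j0 xp w))
      ≤ ENNReal.ofReal a ^ (n + 1) * M.markovOp (M.Lfun xp) x
        + ENNReal.ofReal a ^ (n + 2) * M.Lfun xp x := by
  calc wordSum (n + 2) (fun w => M.wordWeight w x
        * edist (M.orbWord j0 xp w.tail) (M.orbWord j0 xp w))
      ≤ wordSum (n + 2) (fun w => M.wordWeight w x
            * edist (M.actWord w x) (M.orbWord j0 xp w.tail)
          + M.wordWeight w x * edist (M.actWord w x) (M.orbWord j0 xp w)) :=
        wordSum_mono fun w _ => by
          rw [← mul_add]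
          exact mul_le_mul_right (edist_triangle_left _ _ _) _
    _ ≤ _ := by
        rw [wordSum_add]
        refine add_le_add ?_ (wordSum_edist_orbWord_le hxp hcon ha0 (n + 1) x)
        rw [wordSum_succ, markovOp, ← ENNReal.tsum_mul_left]
        refine ENNReal.tsum_le_tsum fun e => ?_
        rw [mul_left_comm]
        refine le_trans (le_of_eq ?_) (mul_le_mul_right
          (wordSum_edist_orbWord_le (j0 := j0) hxp hcon ha0 n (M.w e x)) _)
        rw [← wordSum_const_mul]
        exact wordSum_congr fun w _ => by simp only [wordWeight, actWord, mul_assoc, List.tail_cons]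

end OrbitWords

section Support

variable {M j0 xp} {a : ℝ} {x0 : K} {Λ : Measure (CodeSpace E)}

lemma setLIntegral_window {n : ℕ} {w : List E} {c : ℝ≥0∞} {f : CodeSpace E → ℝ≥0∞}
    (hcyl : ∀ (m : ℤ) (w : List E), Λ (cylSetL m (w.map some)) = M.cesaroLim x0 (M.wordWeight w))
    (hf : ∀ σ ∈ cylSetL (-(n : ℤ)) (w.map some), f σ = c) (hc : c ≠ ⊤) :
    ∫⁻ σ in cylSetL (-(n : ℤ)) (w.map some), f σ ∂Λ
      = M.cesaroLim x0 (fun x => M.wordWeight w x * c) := by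
  rw [setLIntegral_congr_fun (measurableSet_cylSetL _ _) hf, setLIntegral_const, hcyl,
    ← cesaroLim_const_mul _ _ hc]
  simp only [mul_comm]

lemma ae_mem_pathSpace [Countable E] (hnone : ∀ k, Λ {σ | σ k = none} = 0)
    (hcyl : ∀ (m : ℤ) (w : List E),
      Λ (cylSetL m (w.map some)) = M.cesaroLim x0 (M.wordWeight w)) :
    ∀ᵐ σ ∂Λ, σ ∈ M.pathSpace := by
  have h1 : ∀ᵐ σ ∂Λ, ∀ k : ℤ, σ k ≠ none :=
    ae_all_iff.2 fun k => by simpa [ae_iff] using hnone k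
  have h2 : ∀ᵐ σ ∂Λ, ∀ (n : ℤ) (e e' : E), M.i e' ≠ M.t e →
      σ ∉ cylSetL n ([e, e'].map some) := by
    refine ae_all_iff.2 fun n => ae_all_iff.2 fun e => ae_all_iff.2 fun e' => ?_
    by_cases he : M.i e' = M.t e
    · exact ae_of_all _ fun σ h => absurd he h
    · refine Eventually.mono ?_ fun σ hσ _ => hσ
      refine measure_eq_zero_iff_ae_notMem.1 ?_
      rw [hcyl]
      refine (congrArg (M.cesaroLim x0) (funext fun x => ?_)).trans (M.cesaroLim_const x0 0)
      by_cases hx : x ∈ M.Kset (M.i e)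
      · have : M.w e x ∉ M.Kset (M.i e') := fun h => he (eq_of_mem_Kset h (M.w_mapsTo e hx))
        simp [wordWeight, ofReal_p_eq_zero this]
      · simp [wordWeight, ofReal_p_eq_zero hx]
  filter_upwards [h1, h2] with σ hσ1 hσ2 n
  obtain ⟨e, he⟩ := Option.ne_none_iff_exists'.1 (hσ1 n)
  obtain ⟨e', he'⟩ := Option.ne_none_iff_exists'.1 (hσ1 (n + 1))
  refine ⟨e, e', he, he', ?_⟩
  by_contra hne
  exact hσ2 n e e' hne (by simp [cylSetL_cons, cylSetL_nil, he, he'])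

lemma lintegral_edist_orbit_le [Countable E] (hxp : ∀ j, xp j ∈ M.Kset j)
    (hcon : M.IsContractive a) (ha0 : 0 < a) (ha1 : a < 1)
    (hnone : ∀ k, Λ {σ | σ k = none} = 0)
    (hcyl : ∀ (m : ℤ) (w : List E), Λ (cylSetL m (w.map some)) = M.cesaroLim x0 (M.wordWeight w))
    {C : ℝ≥0∞} (hC : ∀ k, M.markovOp^[k] (M.Lfun xp) x0 ≤ C) (n : ℕ) :
    ∫⁻ σ, edist (M.orbit j0 xp σ n) (M.orbit j0 xp σ (n + 1)) ∂Λ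
      ≤ ENNReal.ofReal a ^ (n + 1) * (2 * C) := by
  have hwin : ∀ w : List E, w.length = n + 2 →
      ∫⁻ σ in cylSetL (-((n + 1 : ℕ) : ℤ)) (w.map some),
          edist (M.orbit j0 xp σ n) (M.orbit j0 xp σ (n + 1)) ∂Λ
        = M.cesaroLim x0 (fun x => M.wordWeight w x
            * edist (M.orbWord j0 xp w.tail) (M.orbWord j0 xp w)) := by
    intro w hw
    refine setLIntegral_window hcyl (fun σ hσ => ?_) (edist_ne_top _ _)
    rw [M.orbit_eq_orbWord j0 xp hw hσ]
    obtain ⟨e, w, rfl⟩ := List.exists_cons_of_length_eq_add_one hw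
    rw [List.map_cons, cylSetL_cons, show -((n + 1 : ℕ) : ℤ) + 1 = -(n : ℤ) by push_cast; ring]
      at hσ
    rw [M.orbit_eq_orbWord j0 xp (by simpa using hw) hσ.2, List.tail_cons]
  rw [lintegral_eq_wordSum hnone (n + 2) (-((n + 1 : ℕ) : ℤ)), wordSum_congr hwin]
  refine (M.wordSum_cesaroLim_le x0 _ _).trans ?_
  refine (M.cesaroLim_mono x0 fun x => wordSum_edist_orbWord_tail_le hxp hcon ha0 n x).trans ?_
  have ha : ENNReal.ofReal a ≤ 1 := ENNReal.ofReal_le_one.2 ha1.le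
  have h1 : (fun x => ENNReal.ofReal a ^ (n + 1) * M.markovOp (M.Lfun xp) x
        + ENNReal.ofReal a ^ (n + 2) * M.Lfun xp x)
      ≤ fun x => ENNReal.ofReal a ^ (n + 1) * (M.markovOp (M.Lfun xp) + M.Lfun xp) x := by
    intro x
    simp only [Pi.add_apply, mul_add]
    exact add_le_add_right (mul_le_mul_left (pow_le_pow_right_of_le_one' ha (Nat.le_succ _)) _) _
  refine (M.cesaroLim_mono x0 h1).trans ?_
  rw [cesaroLim_const_mul _ _ (ENNReal.pow_ne_top ENNReal.ofReal_ne_top), cesaroLim_add, two_mul]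
  exact mul_le_mul_right (add_le_add (M.cesaroLim_le x0 fun k => hC (k + 1))
    (M.cesaroLim_le x0 hC)) _

lemma measure_codeDomain [Countable E] [CompleteSpace K] [IsProbabilityMeasure Λ]
    (hxp : ∀ j, xp j ∈ M.Kset j)
    (hcon : M.IsContractive a) (ha0 : 0 < a) (ha1 : a < 1)
    (hnone : ∀ k, Λ {σ | σ k = none} = 0)
    (hcyl : ∀ (m : ℤ) (w : List E), Λ (cylSetL m (w.map some)) = M.cesaroLim x0 (M.wordWeight w))
    {C : ℝ≥0∞} (hCtop : C ≠ ⊤) (hC : ∀ k, M.markovOp^[k] (M.Lfun xp) x0 ≤ C) :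
    Λ (M.codeDomain j0 xp) = 1 := by
  have hm : ∀ n, Measurable fun σ => edist (M.orbit j0 xp σ n) (M.orbit j0 xp σ (n + 1)) :=
    fun n => (measurable_past_of_window (n + 1) fun σ τ h => by
      rw [M.orbit_congr j0 xp (n + 1) h, M.orbit_congr j0 xp n fun k hk => h k (by omega)]).mono
        pastAlgebra_le le_rfl
  have ha : ENNReal.ofReal a < 1 := ENNReal.ofReal_lt_one.2 ha1
  have hfin : ∫⁻ σ, ∑' n, edist (M.orbit j0 xp σ n) (M.orbit j0 xp σ (n + 1)) ∂Λ ≠ ⊤ := by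
    rw [lintegral_tsum fun n => (hm n).aemeasurable]
    refine ne_top_of_le_ne_top ?_ (ENNReal.tsum_le_tsum
      (lintegral_edist_orbit_le hxp hcon ha0 ha1 hnone hcyl hC))
    simp only [pow_succ, ENNReal.tsum_mul_right, ENNReal.tsum_geometric]
    exact ENNReal.mul_ne_top (ENNReal.mul_ne_top (ENNReal.inv_ne_top.2 (tsub_pos_iff_lt.2 ha).ne')
      ENNReal.ofReal_ne_top) (ENNReal.mul_ne_top (by simp) hCtop)
  refine (mem_ae_iff_prob_eq_one (M.measurableSet_codeDomain j0 xp)).1 ?_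
  filter_upwards [ae_mem_pathSpace hnone hcyl,
    ae_lt_top (Measurable.tsum fun n => hm n) hfin] with σ hσ hlt
  exact ⟨hσ, cauchySeq_tendsto_of_complete
    (cauchySeq_of_edist_le_of_tsum_ne_top _ (fun n => le_rfl) hlt.ne)⟩

end Support

end MarkovSystem

section Cylinders

variable {E : Type*}

lemma cylSetL_append_singleton (m : ℤ) (es : List (Option E)) (o : Option E) :
    cylSetL m (es ++ [o]) = cylSetL m es ∩ {σ | σ (m + es.length) = o} := by
  induction es generalizing m with
  | nil => simp [cylSetL_cons, cylSetL_nil]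
  | cons o' es ih =>
    rw [List.cons_append, cylSetL_cons, cylSetL_cons, ih, Set.inter_assoc, List.length_cons]
    have : m + 1 + (es.length : ℤ) = m + (es.length + 1 : ℕ) := by push_cast; ring
    rw [this]

lemma cylSetL_subset_or_disjoint {n m : ℕ} (hnm : n ≤ m) {es es' : List (Option E)}
    (hes : es.length = n + 1) (hes' : es'.length = m + 1) :
    cylSetL (-(m : ℤ)) es' ⊆ cylSetL (-(n : ℤ)) es ∨
      Disjoint (cylSetL (-(n : ℤ)) es) (cylSetL (-(m : ℤ)) es') := by
  by_cases h : (cylSetL (-(n : ℤ)) es ∩ cylSetL (-(m : ℤ)) es').Nonempty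
  · obtain ⟨σ, hσ, hσ'⟩ := h
    refine Or.inl fun τ hτ => (mem_cylSetL_iff_of_mem hσ).2 fun k h1 h2 => ?_
    refine (mem_cylSetL_iff_of_mem hσ').1 hτ k ?_ ?_ <;> rw [hes] at h2 <;> try rw [hes']
    all_goals push_cast at *; lia
  · exact Or.inr (Set.disjoint_iff_inter_eq_empty.2 (Set.not_nonempty_iff_eq_empty.1 h))

end Cylinders

namespace MarkovSystem

variable {K : Type*} [MetricSpace K] [MeasurableSpace K] {N E : Type*} {M : MarkovSystem K N E}
  {j0 : N} {xp : N → K} {a : ℝ} {x0 : K} {Λ : Measure (CodeSpace E)} {pbar : E → K → ℝ}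

section TransitionError

lemma orbWord_eq_of_wordWeight_ne_zero {j : N} {x : K} (hx : x ∈ M.Kset j) {w : List E}
    (hw : w ≠ []) (h : M.wordWeight w x ≠ 0) : M.orbWord j0 xp w = M.actWord w (xp j) := by
  obtain ⟨e, w, rfl⟩ := List.exists_cons_of_ne_nil hw
  have hxe : x ∈ M.Kset (M.i e) := by
    by_contra hxe
    exact h (by simp [wordWeight, ofReal_p_eq_zero hxe])
  obtain rfl := eq_of_mem_Kset hxe hx
  rfl

lemma exists_actWord_mem {j : N} {x y : K} (hx : x ∈ M.Kset j) (hy : y ∈ M.Kset j) {w : List E}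
    (h : M.wordWeight w x ≠ 0) : ∃ j', M.actWord w x ∈ M.Kset j' ∧ M.actWord w y ∈ M.Kset j' := by
  induction w generalizing j x y with
  | nil => exact ⟨j, hx, hy⟩
  | cons e w ih =>
    have hxe : x ∈ M.Kset (M.i e) := by
      by_contra hxe
      exact h (by simp [wordWeight, ofReal_p_eq_zero hxe])
    obtain rfl := eq_of_mem_Kset hxe hx
    exact ih (M.w_mapsTo e hx) (M.w_mapsTo e hy) (right_ne_zero_of_mul h)

lemma exists_abs_p_sub_le (huc : M.IsUniformlyContinuous) (e : E) {ε : ℝ} (hε : 0 < ε) :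
    ∃ c : ℝ, ∀ (j : N) (u v : K), u ∈ M.Kset j → v ∈ M.Kset j →
      ENNReal.ofReal |M.p e u - M.p e v| ≤ ENNReal.ofReal ε + ENNReal.ofReal c * edist u v := by
  obtain ⟨δ, hδ, h⟩ := Metric.uniformContinuousOn_iff.1 (huc e).2 ε hε
  refine ⟨δ⁻¹, fun j u v hu hv => ?_⟩
  rw [edist_dist, ← ENNReal.ofReal_mul (by positivity), ← ENNReal.ofReal_add hε.le (by positivity)]
  refine ENNReal.ofReal_le_ofReal ?_
  have h0 : 0 ≤ δ⁻¹ * dist u v := by positivity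
  by_cases hj : j = M.i e
  · subst hj
    by_cases hd : dist u v < δ
    · have := h u hu v hv hd
      rw [Real.dist_eq] at this
      linarith
    · have h1 : 1 ≤ δ⁻¹ * dist u v := by
        rw [inv_mul_eq_div, le_div_iff₀ hδ]
        linarith
      have h2 : |M.p e u - M.p e v| ≤ 1 := abs_sub_le_iff.2
        ⟨by linarith [M.p_le_one e u, M.p_nonneg e v], by linarith [M.p_le_one e v, M.p_nonneg e u]⟩
      linarith
  · rw [M.p_zero_outside e u fun h => hj (eq_of_mem_Kset hu h),
      M.p_zero_outside e v fun h => hj (eq_of_mem_Kset hv h)]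
    simp only [sub_self, abs_zero]
    linarith

/-- The total error made when the transition probability along `e` is evaluated at the orbit of the
base point instead of the actual orbit, over paths of length `m + 1`. -/
noncomputable def transitionError (M : MarkovSystem K N E) (j0 : N) (xp : N → K) (x0 : K) (e : E)
    (m : ℕ) : ℝ≥0∞ :=
  wordSum (m + 1) fun w => M.cesaroLim x0 fun x =>
    M.wordWeight w x * ENNReal.ofReal |M.p e (M.actWord w x) - M.p e (M.orbWord j0 xp w)|

lemma tendsto_transitionError (hxp : ∀ j, xp j ∈ M.Kset j) (hcon : M.IsContractive a)
    (ha0 : 0 < a) (ha1 : a < 1) (huc : M.IsUniformlyContinuous) {C : ℝ≥0∞} (hCtop : C ≠ ⊤)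
    (hC : ∀ k, M.markovOp^[k] (M.Lfun xp) x0 ≤ C) (e : E) :
    Tendsto (M.transitionError j0 xp x0 e) atTop (𝓝 0) := by
  have hbound : ∀ ε : ℝ, 0 < ε → ∃ c : ℝ, ∀ m, M.transitionError j0 xp x0 e m
      ≤ ENNReal.ofReal ε + ENNReal.ofReal c * ENNReal.ofReal a ^ (m + 1) * C := by
    intro ε hε
    obtain ⟨c, hc⟩ := exists_abs_p_sub_le huc e hε
    refine ⟨c, fun m => (M.wordSum_cesaroLim_le x0 _ _).trans ?_⟩
    have hpt : (fun x => wordSum (m + 1) fun w => M.wordWeight w x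
          * ENNReal.ofReal |M.p e (M.actWord w x) - M.p e (M.orbWord j0 xp w)|)
        ≤ (fun _ => ENNReal.ofReal ε)
          + fun x => ENNReal.ofReal c * ENNReal.ofReal a ^ (m + 1) * M.Lfun xp x := by
      intro x
      obtain ⟨j, hx⟩ := M.exists_mem_Kset x
      have hone : wordSum (m + 1) (fun w => M.wordWeight w x) = 1 := by
        have h1 := M.iterate_markovOp_eq_wordSum (m + 1) (fun _ => 1) x
        rw [iterate_markovOp_const] at h1
        simpa using h1.symm
      have h2 : wordSum (m + 1) (fun w => M.wordWeight w x
            * ENNReal.ofReal |M.p e (M.actWord w x) - M.p e (M.orbWord j0 xp w)|)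
          ≤ wordSum (m + 1) (fun w => ENNReal.ofReal ε * M.wordWeight w x
            + ENNReal.ofReal c
              * (M.wordWeight w x * edist (M.actWord w x) (M.orbWord j0 xp w))) := by
        refine wordSum_mono fun w hw => ?_
        by_cases h0 : M.wordWeight w x = 0
        · simp [h0]
        · rw [orbWord_eq_of_wordWeight_ne_zero hx (List.ne_nil_of_length_eq_add_one hw) h0]
          obtain ⟨j', h3, h4⟩ := exists_actWord_mem hx (hxp j) h0
          rw [mul_comm (ENNReal.ofReal ε), mul_left_comm, ← mul_add]
          exact mul_le_mul_right (hc j' _ _ h3 h4) _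
      refine h2.trans ?_
      rw [wordSum_add, wordSum_const_mul, wordSum_const_mul, hone, mul_one, Pi.add_apply, mul_assoc]
      exact add_le_add_right (mul_le_mul_right (wordSum_edist_orbWord_le hxp hcon ha0 m x) _) _
    refine (M.cesaroLim_mono x0 hpt).trans ?_
    rw [cesaroLim_add, cesaroLim_const, cesaroLim_const_mul _ _ (ENNReal.mul_ne_top
      ENNReal.ofReal_ne_top (ENNReal.pow_ne_top ENNReal.ofReal_ne_top))]
    exact add_le_add_right (mul_le_mul_right (M.cesaroLim_le x0 hC) _) _
  refine ENNReal.tendsto_nhds_zero.2 fun ε hε => ?_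
  wlog hεt : ε ≠ ⊤
  · rw [not_not.1 hεt]; exact Eventually.of_forall fun _ => le_top
  have hε2 : 0 < ε / 2 := ENNReal.half_pos hε.ne'
  have hε2' : ε / 2 ≠ ⊤ := ENNReal.div_ne_top hεt (by simp)
  obtain ⟨c, hc⟩ := hbound _ (ENNReal.toReal_pos hε2.ne' hε2')
  rw [ENNReal.ofReal_toReal hε2'] at hc
  have hlim : Tendsto (fun m : ℕ => ENNReal.ofReal c * ENNReal.ofReal a ^ (m + 1) * C) atTop
      (𝓝 0) := by
    have h1 := (ENNReal.tendsto_pow_atTop_nhds_zero_of_lt_one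
      (ENNReal.ofReal_lt_one.2 ha1)).comp (tendsto_add_atTop_nat 1)
    have h2 := ENNReal.Tendsto.mul_const (ENNReal.Tendsto.const_mul h1
      (Or.inr (ENNReal.ofReal_ne_top (r := c)))) (Or.inr hCtop)
    simpa using h2
  filter_upwards [hlim.eventually (ge_mem_nhds hε2)] with m hm
  exact ((hc m).trans (add_le_add_right hm _)).trans_eq (ENNReal.add_halves ε)

lemma measure_and_lintegral_close [Countable E]
    (hnone : ∀ k, Λ {σ | σ k = none} = 0)
    (hcyl : ∀ (m : ℤ) (w : List E), Λ (cylSetL m (w.map some)) = M.cesaroLim x0 (M.wordWeight w))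
    (e : E) {m : ℕ} {A : Set (CodeSpace E)} (hAm : MeasurableSet A)
    (hA : ∀ w : List E, w.length = m + 1 → cylSetL (-(m : ℤ)) (w.map some) ⊆ A ∨
      Disjoint A (cylSetL (-(m : ℤ)) (w.map some))) :
    Λ (A ∩ {σ | σ 1 = some e}) ≤ ∫⁻ σ in A, ENNReal.ofReal (M.p e (M.orbit j0 xp σ m)) ∂Λ
        + M.transitionError j0 xp x0 e m ∧
      ∫⁻ σ in A, ENNReal.ofReal (M.p e (M.orbit j0 xp σ m)) ∂Λ ≤ Λ (A ∩ {σ | σ 1 = some e})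
        + M.transitionError j0 xp x0 e m := by
  have hEm : MeasurableSet {σ : CodeSpace E | σ 1 = some e} := measurableSet_coord 1 (some e)
  have hsub : ∀ {w : List E} (f : CodeSpace E → ℝ≥0∞),
      cylSetL (-(m : ℤ)) (w.map some) ⊆ A →
      ∫⁻ σ in cylSetL (-(m : ℤ)) (w.map some), A.indicator f σ ∂Λ
        = ∫⁻ σ in cylSetL (-(m : ℤ)) (w.map some), f σ ∂Λ := fun f h =>
    setLIntegral_congr_fun (measurableSet_cylSetL _ _) fun σ hσ => Set.indicator_of_mem (h hσ) f
  have hdisj : ∀ {w : List E} (f : CodeSpace E → ℝ≥0∞),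
      Disjoint A (cylSetL (-(m : ℤ)) (w.map some)) →
      ∫⁻ σ in cylSetL (-(m : ℤ)) (w.map some), A.indicator f σ ∂Λ = 0 := fun f h => by
    rw [setLIntegral_congr_fun (g := fun _ => 0) (measurableSet_cylSetL _ _) fun σ hσ =>
      Set.indicator_of_notMem (Set.disjoint_right.1 h hσ) f, lintegral_zero]
  have hedge : ∀ w : List E, w.length = m + 1 →
      ∫⁻ σ in cylSetL (-(m : ℤ)) (w.map some), {σ | σ 1 = some e}.indicator 1 σ ∂Λ
        = M.cesaroLim x0 fun x =>
          M.wordWeight w x * ENNReal.ofReal (M.p e (M.actWord w x)) := by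
    intro w hw
    have h1 : cylSetL (-(m : ℤ)) ((w ++ [e]).map some)
        = {σ | σ 1 = some e} ∩ cylSetL (-(m : ℤ)) (w.map some) := by
      rw [List.map_append, List.map_singleton, cylSetL_append_singleton, Set.inter_comm,
        List.length_map, hw]
      congr 3
      push_cast; ring_nf
    rw [lintegral_indicator_one hEm, Measure.restrict_apply hEm, ← h1, hcyl]
    congr 1
    funext x
    rw [wordWeight_append, wordWeight_singleton]
  have horb : ∀ w : List E, w.length = m + 1 →
      ∫⁻ σ in cylSetL (-(m : ℤ)) (w.map some), ENNReal.ofReal (M.p e (M.orbit j0 xp σ m)) ∂Λ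
        = M.cesaroLim x0 fun x =>
          M.wordWeight w x * ENNReal.ofReal (M.p e (M.orbWord j0 xp w)) := fun w hw =>
    setLIntegral_window hcyl (fun σ hσ => by rw [M.orbit_eq_orbWord j0 xp hw hσ])
      ENNReal.ofReal_ne_top
  have habs : ∀ u v : ℝ, 0 ≤ u → ENNReal.ofReal v ≤ ENNReal.ofReal u + ENNReal.ofReal |v - u| := by
    intro u v hu
    rw [← ENNReal.ofReal_add hu (abs_nonneg _)]
    exact ENNReal.ofReal_le_ofReal (by linarith [le_abs_self (v - u)])
  have hL : Λ (A ∩ {σ | σ 1 = some e})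
      = ∫⁻ σ, A.indicator ({σ | σ 1 = some e}.indicator 1) σ ∂Λ := by
    rw [lintegral_indicator hAm, lintegral_indicator_one hEm, Measure.restrict_apply hEm,
      Set.inter_comm]
  rw [hL, ← lintegral_indicator hAm, lintegral_eq_wordSum hnone (m + 1) (-(m : ℤ)),
    lintegral_eq_wordSum hnone (m + 1) (-(m : ℤ)), transitionError, ← wordSum_add, ← wordSum_add]
  constructor <;> refine wordSum_mono fun w hw => ?_ <;> rcases hA w hw with h | h
  · rw [hsub _ h, hsub _ h, hedge w hw, horb w hw, ← cesaroLim_add]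
    refine M.cesaroLim_mono x0 fun x => ?_
    rw [Pi.add_apply, ← mul_add]
    exact mul_le_mul_right (habs _ _ (M.p_nonneg _ _)) _
  · rw [hdisj _ h]
    exact zero_le
  · rw [hsub _ h, hsub _ h, hedge w hw, horb w hw, ← cesaroLim_add]
    refine M.cesaroLim_mono x0 fun x => ?_
    rw [Pi.add_apply, ← mul_add, abs_sub_comm]
    exact mul_le_mul_right (habs _ _ (M.p_nonneg _ _)) _
  · rw [hdisj _ h]
    exact zero_le

end TransitionError

section EdgeDensity

/-- The version of the conditional probability of the edge `e` which depends on the past only. -/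
noncomputable def edgeDensity (M : MarkovSystem K N E) (j0 : N) (xp : N → K) (pbar : E → K → ℝ)
    (e : E) (σ : CodeSpace E) : ℝ :=
  if ∃ e0, σ 0 = some e0 ∧ M.t e0 = M.i e then pbar e (M.limCode j0 xp σ) else 0

lemma pbar_mem_Icc (hpbar : M.IsUCExtensionP pbar) (e : E) (x : K) : pbar e x ∈ Set.Icc 0 1 := by
  by_cases hx : x ∈ closure (M.Kset (M.i e))
  · have : Set.MapsTo (pbar e) (M.Kset (M.i e)) (Set.Icc 0 1) := fun y hy => by
      rw [(hpbar e).2.1 y hy]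
      exact ⟨M.p_nonneg _ _, M.p_le_one _ _⟩
    have h := this.closure_of_continuousOn (hpbar e).1 hx
    rwa [isClosed_Icc.closure_eq] at h
  · rw [(hpbar e).2.2 x hx]
    exact ⟨le_rfl, zero_le_one⟩

lemma edgeDensity_mem_Icc (hpbar : M.IsUCExtensionP pbar) (e : E) (σ : CodeSpace E) :
    M.edgeDensity j0 xp pbar e σ ∈ Set.Icc 0 1 := by
  unfold edgeDensity
  split_ifs
  · exact pbar_mem_Icc hpbar e _
  · exact ⟨le_rfl, zero_le_one⟩

lemma measurable_pbar [BorelSpace K] (hpbar : M.IsUCExtensionP pbar) (e : E) :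
    Measurable (pbar e) := by
  have h := ContinuousOn.measurable_piecewise (hpbar e).1
    (continuousOn_const (c := (0 : ℝ)) (s := (closure (M.Kset (M.i e)))ᶜ))
    isClosed_closure.measurableSet
  convert h using 1
  funext x
  by_cases hx : x ∈ closure (M.Kset (M.i e))
  · simp [hx]
  · simp [hx, (hpbar e).2.2 x hx]

lemma measurable_edgeDensity [Countable E] [CompleteSpace K] [BorelSpace K]
    (hpbar : M.IsUCExtensionP pbar) (e : E) :
    Measurable[pastAlgebra E] (M.edgeDensity j0 xp pbar e) := by
  refine Measurable.ite ?_ ((measurable_pbar hpbar e).comp (M.measurable_limCode j0 xp))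
    measurable_const
  refine @measurableSet_setOfPred _ (pastAlgebra E) _ |>.2 (measurable_past_of_window 0 ?_)
  intro σ τ h
  have : σ 0 = τ 0 := by simpa using h 0 le_rfl
  rw [this]

lemma tendsto_p_orbit (hxp : ∀ j, xp j ∈ M.Kset j) (hpbar : M.IsUCExtensionP pbar) (e : E)
    {σ : CodeSpace E} (hσ : σ ∈ M.codeDomain j0 xp) :
    Tendsto (fun m => M.p e (M.orbit j0 xp σ m)) atTop (𝓝 (M.edgeDensity j0 xp pbar e σ)) := by
  obtain ⟨e0, _, h0, _⟩ := hσ.1 0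
  have hmem := orbit_mem (j0 := j0) hxp hσ.1 h0
  by_cases he : M.t e0 = M.i e
  · rw [edgeDensity, if_pos ⟨e0, h0, he⟩]
    rw [he] at hmem
    have hcl : M.limCode j0 xp σ ∈ closure (M.Kset (M.i e)) :=
      mem_closure_of_tendsto (tendsto_limCode hσ) (Eventually.of_forall hmem)
    have := ((hpbar e).1 _ hcl).tendsto.comp (tendsto_nhdsWithin_iff.2
      ⟨tendsto_limCode hσ, Eventually.of_forall fun m => subset_closure (hmem m)⟩)
    refine this.congr fun m => (hpbar e).2.1 _ (hmem m)
  · have hne : ¬ ∃ e0, σ 0 = some e0 ∧ M.t e0 = M.i e := by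
      rintro ⟨e1, h1, h2⟩
      obtain rfl : e0 = e1 := by simpa [h0] using h1
      exact he h2
    rw [edgeDensity, if_neg hne]
    refine tendsto_const_nhds.congr fun m => (M.p_zero_outside e _ fun h => ?_).symm
    exact he (eq_of_mem_Kset (hmem m) h)

lemma measure_inter_coord_eq [Countable E] [CompleteSpace K] [BorelSpace K]
    [IsProbabilityMeasure Λ] (hxp : ∀ j, xp j ∈ M.Kset j) (hpbar : M.IsUCExtensionP pbar)
    (hnone : ∀ k, Λ {σ | σ k = none} = 0)
    (hcyl : ∀ (m : ℤ) (w : List E), Λ (cylSetL m (w.map some)) = M.cesaroLim x0 (M.wordWeight w))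
    (hD : Λ (M.codeDomain j0 xp) = 1) {e : E}
    (hη : Tendsto (M.transitionError j0 xp x0 e) atTop (𝓝 0)) {s : Set (CodeSpace E)}
    (hs : MeasurableSet[pastAlgebra E] s) :
    Λ (s ∩ {σ | σ 1 = some e})
      = ∫⁻ σ in s, ENNReal.ofReal (M.edgeDensity j0 xp pbar e σ) ∂Λ := by
  have key : ∀ (n : ℕ) {A : Set (CodeSpace E)}, MeasurableSet A →
      (∀ m, n ≤ m → ∀ w : List E, w.length = m + 1 → cylSetL (-(m : ℤ)) (w.map some) ⊆ A ∨
        Disjoint A (cylSetL (-(m : ℤ)) (w.map some))) →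
      Λ (A ∩ {σ | σ 1 = some e})
        = ∫⁻ σ in A, ENNReal.ofReal (M.edgeDensity j0 xp pbar e σ) ∂Λ := by
    intro n A hAm hA
    have hlim : Tendsto (fun m => ∫⁻ σ in A, ENNReal.ofReal (M.p e (M.orbit j0 xp σ m)) ∂Λ) atTop
        (𝓝 (∫⁻ σ in A, ENNReal.ofReal (M.edgeDensity j0 xp pbar e σ) ∂Λ)) := by
      refine tendsto_lintegral_of_dominated_convergence (fun _ => 1) (fun m => ?_)
        (fun m => ae_of_all _ fun σ => ENNReal.ofReal_le_one.2 (M.p_le_one _ _)) (by simp) ?_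
      · exact ((M.measurable_orbit j0 xp m (fun x => ENNReal.ofReal (M.p e x)))).mono
          pastAlgebra_le le_rfl
      · filter_upwards [ae_restrict_of_ae (ae_mem_codeDomain hD)] with σ hσ
        exact ENNReal.tendsto_ofReal (tendsto_p_orbit hxp hpbar e hσ)
    refine le_antisymm ?_ ?_
    · have h1 := hlim.add hη
      rw [add_zero] at h1
      refine ge_of_tendsto h1 (eventually_atTop.2 ⟨n, fun m hm => ?_⟩)
      exact (measure_and_lintegral_close hnone hcyl e hAm (hA m hm)).1
    · have h1 := (tendsto_const_nhds (x := Λ (A ∩ {σ | σ 1 = some e}))).add hη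
      rw [add_zero] at h1
      refine le_of_tendsto_of_tendsto hlim h1 (eventually_atTop.2 ⟨n, fun m hm => ?_⟩)
      exact (measure_and_lintegral_close hnone hcyl e hAm (hA m hm)).2
  have hpast : ∀ A, MeasurableSet A → ((Λ.restrict {σ | σ 1 = some e}) A
      = (Λ.withDensity fun σ => ENNReal.ofReal (M.edgeDensity j0 xp pbar e σ)) A ↔
      Λ (A ∩ {σ | σ 1 = some e})
        = ∫⁻ σ in A, ENNReal.ofReal (M.edgeDensity j0 xp pbar e σ) ∂Λ) := fun A hA => by
    rw [Measure.restrict_apply hA, withDensity_apply _ hA]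
  refine (hpast s (pastAlgebra_le s hs)).1 (measure_eq_on_past (fun n es hes => ?_) ?_ hs)
  · refine (hpast _ (measurableSet_cylSetL _ _)).2 (key n (measurableSet_cylSetL _ _) ?_)
    exact fun m hm w hw => cylSetL_subset_or_disjoint hm hes (by simpa using hw)
  · exact (hpast _ MeasurableSet.univ).2
      (key 0 MeasurableSet.univ fun m _ w _ => Or.inl (Set.subset_univ _))

lemma ae_edgeDensity_eq_indicator [Countable E] [CompleteSpace K] [IsProbabilityMeasure Λ]
    (hD : Λ (M.codeDomain j0 xp) = 1) (e : E) :
    M.edgeDensity j0 xp pbar e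
      =ᵐ[Λ] Set.indicator (M.Tset (M.i e)) (fun σ => pbar e (M.code j0 xp σ)) := by
  filter_upwards [ae_mem_codeDomain hD] with σ hσ
  by_cases h : ∃ e0, σ 0 = some e0 ∧ M.t e0 = M.i e
  · rw [edgeDensity, if_pos h, Set.indicator_of_mem (show σ ∈ M.Tset (M.i e) from ⟨hσ.1, h⟩),
      code_eq_limCode hσ]
  · rw [edgeDensity, if_neg h, Set.indicator_of_notMem fun h' => h h'.2]

end EdgeDensity

section Regular

/-- The paths whose limit point lies in the vertex set at which the past ends. -/
def regularSet (M : MarkovSystem K N E) (j0 : N) (xp : N → K) : Set (CodeSpace E) :=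
  {σ | ∃ e, σ 0 = some e ∧ M.limCode j0 xp σ ∈ M.Kset (M.t e)}

lemma measurableSet_regularSet [Countable E] [CompleteSpace K] [BorelSpace K] :
    MeasurableSet[pastAlgebra E] (M.regularSet j0 xp) := by
  have : M.regularSet j0 xp
      = ⋃ e, {σ | σ 0 = some e} ∩ M.limCode j0 xp ⁻¹' M.Kset (M.t e) := by
    ext σ
    simp [regularSet]
  rw [this]
  refine MeasurableSet.iUnion fun e => MeasurableSet.inter ?_
    (M.measurable_limCode j0 xp (M.Kset_measurable _))
  refine @measurableSet_setOfPred _ (pastAlgebra E) _ |>.2 (measurable_past_of_window 0 ?_)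
  intro σ τ h
  have : σ 0 = τ 0 := by simpa using h 0 le_rfl
  rw [this]

lemma regularSet_ae_eq_preimage [Countable E] [CompleteSpace K] [BorelSpace K]
    [IsProbabilityMeasure Λ] (hxp : ∀ j, xp j ∈ M.Kset j) (huc : M.IsUniformlyContinuous)
    (hS : Measure.map (shiftMap E) Λ = Λ) (hD : Λ (M.codeDomain j0 xp) = 1) :
    M.regularSet j0 xp =ᵐ[Λ] shiftMap E ⁻¹' M.regularSet j0 xp := by
  have hm : MeasurableSet (M.regularSet j0 xp) := pastAlgebra_le _ measurableSet_regularSet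
  refine ae_eq_of_ae_subset_of_measure_ge ?_ ?_ hm.nullMeasurableSet (measure_ne_top _ _)
  · filter_upwards [ae_mem_codeDomain hD] with σ hσ
    rintro ⟨e, h0, hF⟩
    obtain ⟨e0, e1, h0', h1, h01⟩ := hσ.1 0
    obtain rfl : e = e0 := by simpa [h0] using h0'
    rw [zero_add] at h1
    rw [← h01] at hF
    refine ⟨e1, by simpa [shiftMap] using h1, ?_⟩
    rw [limCode_shiftMap hxp huc hσ h1 hF]
    exact M.w_mapsTo e1 hF
  · rw [← Measure.map_apply measurable_shiftMap hm, hS]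

/-- Conditioning an asymptotic state on the regular paths gives an equilibrium state. -/
lemma isEquilibrium_cond [Countable E] [CompleteSpace K] [BorelSpace K] [IsProbabilityMeasure Λ]
    (hxp : ∀ j, xp j ∈ M.Kset j) (huc : M.IsUniformlyContinuous) (hpbar : M.IsUCExtensionP pbar)
    (hS : Measure.map (shiftMap E) Λ = Λ) (hD : Λ (M.codeDomain j0 xp) = 1)
    (hdens : ∀ (e : E) (s), MeasurableSet[pastAlgebra E] s → Λ (s ∩ {σ | σ 1 = some e})
      = ∫⁻ σ in s, ENNReal.ofReal (M.edgeDensity j0 xp pbar e σ) ∂Λ)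
    (hpos : Λ (M.regularSet j0 xp) ≠ 0) :
    M.IsEquilibrium j0 xp (ProbabilityTheory.cond Λ (M.regularSet j0 xp)) := by
  have hA : MeasurableSet[pastAlgebra E] (M.regularSet j0 xp) := measurableSet_regularSet
  have hm : MeasurableSet (M.regularSet j0 xp) := pastAlgebra_le _ hA
  have hprob := ProbabilityTheory.cond_isProbabilityMeasure (μ := Λ) hpos
  have hD' : ∀ᵐ σ ∂(ProbabilityTheory.cond Λ (M.regularSet j0 xp)), σ ∈ M.codeDomain j0 xp :=
    ProbabilityTheory.cond_absolutelyContinuous.ae_le (ae_mem_codeDomain hD)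
  have hF := M.measurable_limCode j0 xp
  refine ⟨hprob, ?_, (mem_ae_iff_prob_eq_one (M.measurableSet_codeDomain j0 xp)).1 hD',
    fun e => ?_⟩
  · ext s hs
    rw [Measure.map_apply measurable_shiftMap hs, ProbabilityTheory.cond_apply hm,
      ProbabilityTheory.cond_apply hm]
    congr 1
    have h : (M.regularSet j0 xp ∩ shiftMap E ⁻¹' s : Set (CodeSpace E))
        =ᵐ[Λ] (shiftMap E ⁻¹' M.regularSet j0 xp ∩ shiftMap E ⁻¹' s : Set (CodeSpace E)) :=
      (regularSet_ae_eq_preimage hxp huc hS hD).inter (ae_eq_refl _)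
    rw [measure_congr h, ← Set.preimage_inter,
      ← Measure.map_apply measurable_shiftMap (hm.inter hs), hS]
  · have hcode : (fun σ => M.p e (M.limCode j0 xp σ))
        =ᵐ[ProbabilityTheory.cond Λ (M.regularSet j0 xp)] fun σ => M.p e (M.code j0 xp σ) := by
      filter_upwards [hD'] with σ hσ
      rw [code_eq_limCode hσ]
    refine EventuallyEq.trans ?_ hcode
    refine (condExp_coord_ae_eq_iff e ((M.p_measurable e).comp hF) (fun σ => M.p_nonneg _ _)
      fun σ => M.p_le_one _ _).2 fun s hs => ?_
    rw [ProbabilityTheory.cond_apply hm, ProbabilityTheory.cond, Measure.restrict_smul,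
      lintegral_smul_measure, smul_eq_mul, Measure.restrict_restrict (pastAlgebra_le s hs),
      ← Set.inter_assoc, hdens e _ (hA.inter hs), Set.inter_comm s]
    congr 1
    refine setLIntegral_congr_fun_ae (hm.inter (pastAlgebra_le s hs)) ?_
    filter_upwards [ae_mem_codeDomain hD] with σ hσ
    rintro ⟨⟨e0, h0, hmem⟩, _⟩
    by_cases he : M.t e0 = M.i e
    · rw [edgeDensity, if_pos ⟨e0, h0, he⟩, (hpbar e).2.1 _ (he ▸ hmem)]
      rfl
    · have hne : ¬ ∃ e0, σ 0 = some e0 ∧ M.t e0 = M.i e := by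
        rintro ⟨e1, h1, h2⟩
        obtain rfl : e0 = e1 := by simpa [h0] using h1
        exact he h2
      rw [edgeDensity, if_neg hne]
      simp [M.p_zero_outside e _ fun h => he (eq_of_mem_Kset hmem h)]

lemma measure_regularSet_ne_zero [Countable E] [CompleteSpace K] [IsProbabilityMeasure Λ]
    (hD : Λ (M.codeDomain j0 xp) = 1) {i : N}
    (hi : 0 < Λ (M.Tset i ∩ (M.code j0 xp) ⁻¹' (M.Kset i))) : Λ (M.regularSet j0 xp) ≠ 0 := by
  refine (hi.trans_le (measure_mono_ae ?_)).ne'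
  filter_upwards [ae_mem_codeDomain hD] with σ hσ
  rintro ⟨⟨_, e, h0, rfl⟩, hF⟩
  refine ⟨e, h0, ?_⟩
  rw [← code_eq_limCode hσ]
  exact hF

end Regular

end MarkovSystem

variable {K : Type*} [MetricSpace K] [CompleteSpace K] [MeasurableSpace K] [BorelSpace K]
  {N E : Type*} [Countable N] [Countable E]

/-- If `M` is contractive with rate `0 < a < 1`, uniformly continuous,
non-degenerate, with `b < ∞` and a dominating Markov chain, then `E(M)` is nonempty iff
Condition (T) holds at some `x₀ ∈ K`. -/
theorem equilibrium_nonempty_iff_conditionT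
    (M : MarkovSystem K N E) (j0 : N) (xp : N → K) (hxp : ∀ j, xp j ∈ M.Kset j)
    (a : ℝ) (ha0 : 0 < a) (ha1 : a < 1) (hcon : M.IsContractive a)
    (huc : M.IsUniformlyContinuous) (hb : M.bConst xp ≠ ⊤)
    (pbar : E → K → ℝ) (hpbar : M.IsUCExtensionP pbar)
    (hnd : M.IsNonDegenerate j0 xp pbar)
    (hdom : M.HasDominatingChain) :
    (∃ Λ : Measure (CodeSpace E), M.IsEquilibrium j0 xp Λ) ↔ ∃ x0 : K, M.ConditionT x0 := by
  constructor
  · rintro ⟨Λ, hΛ⟩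
    have := hΛ.1
    have hF : Measurable (M.limCode j0 xp) :=
      (M.measurable_limCode j0 xp).mono pastAlgebra_le le_rfl
    have := Measure.isProbabilityMeasure_map (μ := Λ) hF.aemeasurable
    exact M.exists_conditionT_of_invariant fun f hf =>
      M.lintegral_markovOp_map_limCode hxp huc hΛ hf
  · rintro ⟨x0, hT⟩
    obtain ⟨Λ, hΛ, hnone, hS, hcyl⟩ := M.exists_stationary_measure (x0 := x0)
      fun ε hε => M.exists_cesaroLim_edgeTail_le hT hdom hε
    obtain ⟨C, hCtop, hC⟩ := MarkovSystem.exists_iterate_Lfun_le hxp hcon ha0 ha1 hb x0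
    have hD : Λ (M.codeDomain j0 xp) = 1 :=
      MarkovSystem.measure_codeDomain hxp hcon ha0 ha1 hnone hcyl hCtop hC
    have hdens : ∀ (e : E) (s), MeasurableSet[pastAlgebra E] s → Λ (s ∩ {σ | σ 1 = some e})
        = ∫⁻ σ in s, ENNReal.ofReal (M.edgeDensity j0 xp pbar e σ) ∂Λ := fun e s hs =>
      MarkovSystem.measure_inter_coord_eq hxp hpbar hnone hcyl hD
        (MarkovSystem.tendsto_transitionError hxp hcon ha0 ha1 huc hCtop hC e) hs
    have hasym : M.IsAsymptotic j0 xp pbar Λ := by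
      refine ⟨hΛ, hS, hD, fun e => ?_⟩
      refine EventuallyEq.trans ?_ (MarkovSystem.ae_edgeDensity_eq_indicator hD e)
      exact (condExp_coord_ae_eq_iff e (MarkovSystem.measurable_edgeDensity hpbar e)
        (fun σ => (MarkovSystem.edgeDensity_mem_Icc hpbar e σ).1)
        fun σ => (MarkovSystem.edgeDensity_mem_Icc hpbar e σ).2).2 (hdens e)
    obtain ⟨i, hi⟩ := hnd Λ hasym
    exact ⟨_, MarkovSystem.isEquilibrium_cond hxp huc hpbar hS hD hdens
      (MarkovSystem.measure_regularSet_ne_zero hD hi)⟩
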